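/- Let n and d be positive integers with d ≥ 3 and gcd(n,d) = 1, and let a, b be indeterminates. Then the sum over k from 0 to n−1 of [2dk+1] · (aq, q/a, bq, q/b; q^d)_k · (q; q^d)_k^2 / ( (aq^d, q^d/a, bq^d, q^d/b; q^d)_k · (q^d; q^d)_k^2 ) · q^{(2d−3)k} is congruent to 0 modulo [n]·Φ_n(q) if n ≡ −1 (mod d), and congruent to 0 modulo [n] otherwise. -/

import Mathlib

open Finset

noncomputable section

/-- Polynomial ring in the variables `q, a, b, c` (indices `0,1,2,3`). -/
abbrev R : Type := MvPolynomial (Fin 4) ℚ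

/-- Field of rational functions in `q, a, b, c`. -/
abbrev K : Type := FractionRing R

def qv : K := algebraMap R K (MvPolynomial.X 0)
def av : K := algebraMap R K (MvPolynomial.X 1)
def bv : K := algebraMap R K (MvPolynomial.X 2)
def cv : K := algebraMap R K (MvPolynomial.X 3)

/-- The q-shifted factorial `(x; Q)_k = (1-x)(1-xQ)⋯(1-xQ^{k-1})`. -/
def poch (x Q : K) (k : ℕ) : K := ∏ i ∈ Finset.range k, (1 - x * Q ^ i)

/-- The q-integer `[m] = (1-q^m)/(1-q)` (allowing integer `m`). -/
def qint (m : ℤ) : K := (1 - qv ^ m) / (1 - qv)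

/-- The n-th cyclotomic polynomial, as a polynomial in the variable `q`. -/
def Phi (n : ℕ) : R :=
  Polynomial.eval₂ MvPolynomial.C (MvPolynomial.X 0) (Polynomial.cyclotomic n ℚ)

/-- `[n] = 1 + q + ⋯ + q^{n-1}` as a polynomial in `q`. -/
def qintR (n : ℕ) : R := ∑ i ∈ Finset.range n, (MvPolynomial.X 0 : R) ^ i

/-- `x ≡ 0 (mod M)` as rational functions: `x = M·f/g` where `g` shares no prime
factor with `M` (i.e. the numerator of `x` in lowest terms is divisible by `M`). -/
def modCong (M : R) (x : K) : Prop :=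
  ∃ f g : R, g ≠ 0 ∧ (∀ p : R, Prime p → p ∣ M → ¬ p ∣ g) ∧
    x * algebraMap R K g = algebraMap R K (M * f)

/-!
At a primitive `m`-th root of unity `q`, with `m` prime to `d`, the series terminates at the index
`r` with `q * (q ^ d) ^ r = 1`, and the well-poised factors are invariant under `k ↦ r - k` while
the very-well-poised one changes sign; so the sum over `k < m` vanishes. Consecutive blocks of
length `m` are proportional modulo `Φ_m`, which gives divisibility by `Φ_m` for every divisor
`m > 1` of `n`, hence by `[n]`.

For the additional factor `Φ_n` when `n + 1 = d * s`, one of the parameters equal to `1` is deformed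
to an indeterminate `c`. The deformed sum is divisible by `Φ_n`, so its values at `c = 1` and at
`c = q ^ (1 + d * r)`, where `r = n - s`, differ by a multiple of `Φ_n ^ 2`, because
`q ^ (1 + d * r) ≡ 1` modulo `Φ_n`. At the second value the series terminates and Watson's
transformation turns it into a sum each of whose terms is divisible by `Φ_n ^ 2`.
-/

/-- The `q`-shifted factorial `(x; Q)_k` over an arbitrary commutative ring. -/
def qPochhammer {F : Type*} [CommRing F] (x Q : F) (k : ℕ) : F :=
  ∏ i ∈ range k, (1 - x * Q ^ i)

section QPochhammer

variable {F : Type*} [CommRing F] (x Q : F) (k l : ℕ)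

@[simp]
lemma qPochhammer_zero : qPochhammer x Q 0 = 1 := prod_range_zero _

lemma qPochhammer_succ : qPochhammer x Q (k + 1) = qPochhammer x Q k * (1 - x * Q ^ k) :=
  prod_range_succ _ _

lemma qPochhammer_add :
    qPochhammer x Q (k + l) = qPochhammer x Q k * qPochhammer (x * Q ^ k) Q l := by
  simp only [qPochhammer, prod_range_add, pow_add, mul_assoc]

lemma qPochhammer_succ' : qPochhammer x Q (k + 1) = (1 - x) * qPochhammer (x * Q) Q k := by
  rw [add_comm, qPochhammer_add, pow_one, qPochhammer_succ]
  simp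

variable {x Q k}

lemma qPochhammer_ne_zero [IsDomain F] (h : ∀ i < k, x * Q ^ i ≠ 1) : qPochhammer x Q k ≠ 0 :=
  prod_ne_zero_iff.2 fun i hi => sub_ne_zero.2 (h i (mem_range.1 hi)).symm

lemma qPochhammer_eq_zero {i : ℕ} (hi : i < k) (h : x * Q ^ i = 1) : qPochhammer x Q k = 0 :=
  prod_eq_zero (mem_range.2 hi) (by rw [h, sub_self])

lemma qPochhammer_reflect [IsDomain F] {y : F} (hQ : Q ≠ 0) (h : y * (x * Q ^ k) = Q) :
    qPochhammer y Q k * ∏ i ∈ range k, -(x * Q ^ i) = qPochhammer x Q k := by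
  rw [qPochhammer, ← prod_range_reflect, ← prod_mul_distrib]
  refine prod_congr rfl fun i hi => ?_
  have exponents : Q ^ k = Q ^ (k - 1 - i) * Q ^ i * Q := by
    rw [← pow_add, ← pow_succ]; congr 1; have := mem_range.1 hi; omega
  have cancelled : y * x * (Q ^ (k - 1 - i) * Q ^ i) = 1 :=
    mul_right_cancel₀ hQ (by rw [exponents] at h; linear_combination h)
  linear_combination cancelled

lemma qPochhammer_ne_zero_of_le {l : ℕ} (hkl : k ≤ l) (h : qPochhammer x Q l ≠ 0) :
    qPochhammer x Q k ≠ 0 := by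
  obtain ⟨i, rfl⟩ := Nat.exists_eq_add_of_le hkl
  exact left_ne_zero_of_mul (qPochhammer_add x Q k i ▸ h)

lemma inv_qPochhammer {F : Type*} [Field F] {x Q : F} {k : ℕ} (h : qPochhammer x Q (k + 1) ≠ 0) :
    (qPochhammer x Q k)⁻¹ = (1 - x * Q ^ k) * (qPochhammer x Q (k + 1))⁻¹ := by
  rw [qPochhammer_succ] at h ⊢
  rw [mul_inv, mul_left_comm, mul_inv_cancel₀ (right_ne_zero_of_mul h), mul_one]

end QPochhammer

/-- The contribution of a pair of lower parameters `u`, `v` and their well-poised partners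
`A Q / u`, `A Q / v` to the `k`-th term of a very-well-poised series with base parameter `A`. Its
share `u v / (A Q)` of the argument is included. -/
def wellPoised {F : Type*} [Field F] (A u v Q : F) (k : ℕ) : F :=
  qPochhammer (A * Q / u) Q k * qPochhammer (A * Q / v) Q k /
    (qPochhammer u Q k * qPochhammer v Q k) * (u * v / (A * Q)) ^ k

/-- The very-well-poised factor of the `k`-th term, up to the constant `1 - A`; the power `Q ^ k`
makes it odd under the reflection of a terminating series. -/
def veryWellPoised {F : Type*} [Field F] (A Q : F) (k : ℕ) : F := (1 - A * Q ^ (2 * k)) / Q ^ k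

section WellPoised

variable {F : Type*} [Field F] {A u v Q : F}

lemma veryWellPoised_zero : veryWellPoised A Q 0 = 1 - A := by simp [veryWellPoised]

lemma wellPoised_zero : wellPoised A u v Q 0 = 1 := by simp [wellPoised]

lemma veryWellPoised_add (j i : ℕ) :
    veryWellPoised A Q (j + i) = (Q ^ j)⁻¹ * veryWellPoised (A * Q ^ (2 * j)) Q i := by
  rw [veryWellPoised, veryWellPoised, mul_add, pow_add, pow_add, div_eq_mul_inv, div_eq_mul_inv,
    mul_inv]
  ring

lemma wellPoised_add (hQ : Q ≠ 0) (j i : ℕ) :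
    wellPoised A u v Q (j + i) =
      wellPoised A u v Q j * wellPoised (A * Q ^ (2 * j)) (u * Q ^ j) (v * Q ^ j) Q i := by
  have shift (w : F) : A * Q ^ (2 * j) * Q / (w * Q ^ j) = A * Q / w * Q ^ j := by
    rw [two_mul, pow_add]; field_simp
  have base : u * Q ^ j * (v * Q ^ j) / (A * Q ^ (2 * j) * Q) = u * v / (A * Q) := by
    rw [two_mul, pow_add]; field_simp
  simp only [wellPoised, qPochhammer_add, shift, base, pow_add, div_eq_mul_inv, mul_inv]
  ring

lemma wellPoised_succ {k : ℕ} (huk : qPochhammer u Q (k + 1) ≠ 0)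
    (hvk : qPochhammer v Q (k + 1) ≠ 0) :
    (1 - u * Q ^ k) * (1 - v * Q ^ k) * wellPoised A u v Q (k + 1) =
      (1 - A * Q / u * Q ^ k) * (1 - A * Q / v * Q ^ k) * (u * v / (A * Q)) *
        wellPoised A u v Q k := by
  simp only [wellPoised, div_eq_mul_inv _ (_ * _), mul_inv (qPochhammer _ _ _),
    inv_qPochhammer huk, inv_qPochhammer hvk, qPochhammer_succ (A * Q / u),
    qPochhammer_succ (A * Q / v), pow_succ (u * v * (A * Q)⁻¹)]
  ring

lemma veryWellPoised_reflect (hQ : Q ≠ 0) {k l : ℕ} (hA : A * Q ^ (k + l) = 1) :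
    veryWellPoised A Q l = -veryWellPoised A Q k := by
  rw [veryWellPoised, veryWellPoised, ← neg_div, div_eq_div_iff (pow_ne_zero _ hQ)
    (pow_ne_zero _ hQ)]
  linear_combination (-Q ^ k - Q ^ l) * hA

lemma prod_range_pow_mul_self (Q : F) (k : ℕ) :
    (∏ i ∈ range k, Q ^ i) * (∏ i ∈ range k, Q ^ i) * Q ^ k = Q ^ (k * k) := by
  induction k with
  | zero => simp
  | succ k ih => rw [prod_range_succ]; linear_combination Q ^ (2 * k + 1) * ih

lemma prod_range_mul_pow (x Q : F) (k : ℕ) :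
    ∏ i ∈ range k, -(x * Q ^ i) = (-x) ^ k * ∏ i ∈ range k, Q ^ i := by
  simp only [← neg_mul, prod_mul_distrib, prod_const, card_range]

lemma wellPoised_eq_of_mul_pow_eq_one (hQ : Q ≠ 0) (hu : u ≠ 0) (hv : v ≠ 0) {k l : ℕ}
    (hA : A * Q ^ (k + l) = 1) (hul : qPochhammer u Q l ≠ 0) (hvl : qPochhammer v Q l ≠ 0) :
    wellPoised A u v Q k = qPochhammer u Q (k + l) * qPochhammer v Q (k + l) /
      (qPochhammer u Q k * qPochhammer u Q l * (qPochhammer v Q k * qPochhammer v Q l) *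
        Q ^ (k * l)) := by
  have reflect {w : F} (hw : w ≠ 0) : qPochhammer (w * Q ^ l) Q k =
      qPochhammer (A * Q / w) Q k * ((-(w * Q ^ l)) ^ k * ∏ i ∈ range k, Q ^ i) := by
    rw [← qPochhammer_reflect hQ (y := A * Q / w), prod_range_mul_pow]
    field_simp
    linear_combination hA
  have hAQ : u * v / (A * Q) * Q = u * v * Q ^ (k + l) := by
    have : A ≠ 0 := left_ne_zero_of_mul_eq_one hA
    field_simp
    linear_combination -hA
  have powers : (-(u * Q ^ l)) ^ k * (∏ i ∈ range k, Q ^ i) *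
      ((-(v * Q ^ l)) ^ k * ∏ i ∈ range k, Q ^ i) = (u * v / (A * Q)) ^ k * Q ^ (k * l) := by
    refine mul_right_cancel₀ (pow_ne_zero k hQ) ?_
    calc _ = (-(u * Q ^ l) * -(v * Q ^ l)) ^ k *
          ((∏ i ∈ range k, Q ^ i) * (∏ i ∈ range k, Q ^ i) * Q ^ k) := by rw [mul_pow]; ring
      _ = (u * v * Q ^ (k + l)) ^ k * Q ^ (k * l) := by rw [prod_range_pow_mul_self]; ring
      _ = _ := by rw [← hAQ, mul_pow]; ring
  rw [wellPoised, add_comm k l, qPochhammer_add, qPochhammer_add, reflect hu, reflect hv,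
    eq_div_of_mul_eq (pow_ne_zero _ hQ) powers.symm]
  generalize (-(u * Q ^ l)) ^ k * (∏ i ∈ range k, Q ^ i) = U
  generalize (-(v * Q ^ l)) ^ k * (∏ i ∈ range k, Q ^ i) = V
  field_simp

lemma wellPoised_reflect (hQ : Q ≠ 0) (hu : u ≠ 0) (hv : v ≠ 0) {k l : ℕ}
    (hA : A * Q ^ (k + l) = 1) (huk : qPochhammer u Q k ≠ 0) (hvk : qPochhammer v Q k ≠ 0)
    (hul : qPochhammer u Q l ≠ 0) (hvl : qPochhammer v Q l ≠ 0) :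
    wellPoised A u v Q l = wellPoised A u v Q k := by
  rw [wellPoised_eq_of_mul_pow_eq_one hQ hu hv hA hul hvl,
    wellPoised_eq_of_mul_pow_eq_one hQ hu hv (add_comm k l ▸ hA) huk hvk, add_comm l k,
    mul_comm l k]
  ring

lemma sum_veryWellPoised_mul_eq_zero [CharZero F] (hQ : Q ≠ 0) {r : ℕ} (hA : A * Q ^ r = 1)
    {w : ℕ → F} (hw : ∀ k ≤ r, w (r - k) = w k) :
    ∑ k ∈ range (r + 1), veryWellPoised A Q k * w k = 0 := by
  rw [← self_eq_neg, ← sum_neg_distrib, ← sum_range_reflect]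
  refine sum_congr rfl fun k hk => ?_
  have hk : k ≤ r := Nat.lt_succ_iff.1 (mem_range.1 hk)
  rw [Nat.add_sub_cancel, hw k hk, veryWellPoised_reflect hQ (k := k), neg_mul]
  rwa [Nat.add_sub_cancel' hk]

end WellPoised

/-- The `j`-th term of the terminating balanced series summed by the `q`-Saalschütz formula. -/
def saalschutzTerm {F : Type*} [Field F] (A u v Q : F) (k j : ℕ) : F :=
  qPochhammer (Q ^ k)⁻¹ Q j * qPochhammer (A * Q ^ k) Q j * qPochhammer (u * v / (A * Q)) Q j *
    Q ^ j / (qPochhammer Q Q j * qPochhammer u Q j * qPochhammer v Q j)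

section Saalschutz

variable {F : Type*} [Field F] {A u v Q : F}

lemma saalschutz_certificate {x y : F} (hA : A ≠ 0) (hQ : Q ≠ 0) (hu : u ≠ 0) (hv : v ≠ 0)
    (hy : y ≠ 0) :
    (1 - A * Q * y ^ 2) * ((1 - Q * x) * (1 - u * x) * (1 - v * x)) +
      ((1 - u * y) * (1 - v * y) * ((1 - (y * Q)⁻¹) * (1 - A * (y * Q) * x) * (x * Q)) -
        (1 - A * Q / u * y) * (1 - A * Q / v * y) * (u * v / (A * Q)) *
          ((1 - y⁻¹ * x) * (1 - A * y) * (x * Q))) =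
    (1 - A * Q * y ^ 2) *
      ((1 - y⁻¹ * x) * (1 - A * (y * Q) * x) * (1 - u * v / (A * Q) * (x * Q))) := by
  field_simp
  ring

lemma sum_saalschutzTerm_sub (hA : A ≠ 0) (hQ : Q ≠ 0) (hu : u ≠ 0) (hv : v ≠ 0) (k J : ℕ)
    (hQJ : qPochhammer Q Q J ≠ 0) (huJ : qPochhammer u Q J ≠ 0) (hvJ : qPochhammer v Q J ≠ 0) :
    ∑ j ∈ range (J + 1), ((1 - u * Q ^ k) * (1 - v * Q ^ k) * saalschutzTerm A u v Q (k + 1) j -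
        (1 - A * Q / u * Q ^ k) * (1 - A * Q / v * Q ^ k) * (u * v / (A * Q)) *
          saalschutzTerm A u v Q k j) =
      (1 - A * Q * (Q ^ k) ^ 2) *
        (qPochhammer (Q ^ k)⁻¹ Q J * qPochhammer (A * Q ^ (k + 1)) Q J *
          qPochhammer (u * v / (A * Q)) Q (J + 1) /
            (qPochhammer Q Q J * qPochhammer u Q J * qPochhammer v Q J)) := by
  induction J with
  | zero =>
    simp only [saalschutzTerm, zero_add, sum_range_one, qPochhammer_succ, qPochhammer_zero]
    field_simp
    ring
  | succ J ih =>
    have lower : qPochhammer (Q ^ (k + 1))⁻¹ Q (J + 1) =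
        (1 - (Q ^ k * Q)⁻¹) * qPochhammer (Q ^ k)⁻¹ Q J := by
      rw [qPochhammer_succ', pow_succ]; congr 2; field_simp
    have upper : qPochhammer (A * Q ^ k) Q (J + 1) =
        (1 - A * Q ^ k) * qPochhammer (A * Q ^ (k + 1)) Q J := by
      rw [qPochhammer_succ', mul_assoc, ← pow_succ]
    have mono {x : F} : qPochhammer x Q (J + 1) ≠ 0 → qPochhammer x Q J ≠ 0 :=
      qPochhammer_ne_zero_of_le J.le_succ
    rw [sum_range_succ, ih (mono hQJ) (mono huJ) (mono hvJ), saalschutzTerm, saalschutzTerm, lower,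
      upper, qPochhammer_succ (A * Q ^ (k + 1)), qPochhammer_succ (Q ^ k)⁻¹,
      qPochhammer_succ (u * v / (A * Q)) Q (J + 1), pow_succ Q k, pow_succ Q J]
    simp only [div_eq_mul_inv _ (_ * _ * _), mul_inv (_ * _), mul_inv (qPochhammer _ _ _),
      inv_qPochhammer hQJ, inv_qPochhammer huJ, inv_qPochhammer hvJ]
    linear_combination qPochhammer (Q ^ k)⁻¹ Q J * qPochhammer (A * (Q ^ k * Q)) Q J *
      qPochhammer (u * v / (A * Q)) Q (J + 1) * ((qPochhammer Q Q (J + 1))⁻¹ *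
        (qPochhammer u Q (J + 1))⁻¹ * (qPochhammer v Q (J + 1))⁻¹) *
      saalschutz_certificate (x := Q ^ J) hA hQ hu hv (pow_ne_zero k hQ)

theorem sum_saalschutzTerm (hA : A ≠ 0) (hQ : Q ≠ 0) (hu : u ≠ 0) (hv : v ≠ 0) (k : ℕ)
    (hQk : qPochhammer Q Q k ≠ 0) (huk : qPochhammer u Q k ≠ 0) (hvk : qPochhammer v Q k ≠ 0) :
    ∑ j ∈ range (k + 1), saalschutzTerm A u v Q k j = wellPoised A u v Q k := by
  induction k with
  | zero => simp [saalschutzTerm, wellPoised]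
  | succ k ih =>
    have mono {x : F} : qPochhammer x Q (k + 1) ≠ 0 → qPochhammer x Q k ≠ 0 :=
      qPochhammer_ne_zero_of_le k.le_succ
    have terminates : qPochhammer (Q ^ k)⁻¹ Q (k + 1) = 0 :=
      qPochhammer_eq_zero k.lt_succ_self (inv_mul_cancel₀ (pow_ne_zero k hQ))
    have last : saalschutzTerm A u v Q k (k + 1) = 0 := by
      rw [saalschutzTerm, terminates]; ring
    have recurrence := sum_saalschutzTerm_sub hA hQ hu hv k (k + 1) hQk huk hvk
    rw [sum_sub_distrib, ← mul_sum, ← mul_sum, sum_range_succ (saalschutzTerm A u v Q k),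
      ih (mono hQk) (mono huk) (mono hvk), last, terminates, zero_mul, zero_mul,
      zero_div, mul_zero, add_zero, sub_eq_zero] at recurrence
    rw [← wellPoised_succ huk hvk] at recurrence
    rw [qPochhammer_succ] at huk hvk
    exact mul_left_cancel₀ (mul_ne_zero (right_ne_zero_of_mul huk) (right_ne_zero_of_mul hvk))
      recurrence

end Saalschutz

section Orthogonality

variable {F : Type*} [Field F] {A v Q : F}

lemma sum_veryWellPoised_mul_wellPoised (hA : A ≠ 0) (hQ : Q ≠ 0) (hv : v ≠ 0) (k : ℕ)
    (hQk : qPochhammer Q Q k ≠ 0) (hvk : qPochhammer v Q k ≠ 0) :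
    ∑ i ∈ range (k + 1), veryWellPoised A Q i * wellPoised A Q v Q i =
      qPochhammer A Q (k + 1) * qPochhammer (A * Q / v * Q) Q k * (v / (A * Q)) ^ k /
        (qPochhammer Q Q k * qPochhammer v Q k) := by
  induction k with
  | zero => simp [veryWellPoised_zero, wellPoised_zero, qPochhammer_succ]
  | succ k ih =>
    have mono {x : F} : qPochhammer x Q (k + 1) ≠ 0 → qPochhammer x Q k ≠ 0 :=
      qPochhammer_ne_zero_of_le k.le_succ
    have base : (Q * v / (A * Q)) ^ (k + 1) * (Q ^ (k + 1))⁻¹ = (v / (A * Q)) ^ (k + 1) := by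
      rw [← inv_pow, ← mul_pow]; field_simp
    rw [sum_range_succ, ih (mono hQk) (mono hvk), wellPoised, veryWellPoised,
      mul_div_cancel_right₀ A hQ, qPochhammer_succ' (A * Q / v), qPochhammer_succ A Q (k + 1),
      qPochhammer_succ (A * Q / v * Q)]
    simp only [div_eq_mul_inv _ (qPochhammer _ _ _ * _), mul_inv (qPochhammer _ _ _),
      inv_qPochhammer hQk, inv_qPochhammer hvk]
    have telescope : (1 - Q * Q ^ k) * (1 - v * Q ^ k) +
        (1 - A * Q ^ (2 * (k + 1))) * (1 - A * Q / v) * (v / (A * Q)) =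
        (1 - A * Q ^ (k + 1)) * (1 - A * Q / v * Q * Q ^ k) * (v / (A * Q)) := by
      field_simp
      ring
    rw [div_eq_mul_inv _ (Q ^ (k + 1))]
    linear_combination qPochhammer A Q (k + 1) * qPochhammer (A * Q / v * Q) Q k *
      (v / (A * Q)) ^ k * ((qPochhammer Q Q (k + 1))⁻¹ * (qPochhammer v Q (k + 1))⁻¹) * telescope +
      (1 - A * Q ^ (2 * (k + 1))) * qPochhammer A Q (k + 1) * ((1 - A * Q / v) *
      qPochhammer (A * Q / v * Q) Q k) * ((qPochhammer Q Q (k + 1))⁻¹ * (qPochhammer v Q (k + 1))⁻¹)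
      * base

lemma sum_veryWellPoised_mul_wellPoised_eq_ite (hA : A ≠ 0) (hQ : Q ≠ 0) (n : ℕ)
    (hQn : qPochhammer Q Q n ≠ 0) (hAn : qPochhammer (A * Q ^ (n + 1)) Q n ≠ 0) :
    ∑ i ∈ range (n + 1), veryWellPoised A Q i * wellPoised A Q (A * Q ^ (n + 1)) Q i =
      if n = 0 then 1 - A else 0 := by
  rw [sum_veryWellPoised_mul_wellPoised hA hQ (mul_ne_zero hA (pow_ne_zero _ hQ)) n hQn hAn]
  rcases n with _ | n
  · simp [qPochhammer_succ]
  · rw [qPochhammer_eq_zero (x := A * Q / _ * Q) n.lt_succ_self, mul_zero, zero_mul, zero_div,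
      if_neg n.succ_ne_zero]
    field_simp
    ring

end Orthogonality

section Watson

variable {F : Type*} [Field F] {A u v u' v' Q : F}

/-- The coefficient of the `j`-th inner sum when one pair of well-poised parameters of a
terminating very-well-poised series is expanded by the `q`-Saalschütz formula. -/
def baileyCoeff (A u v Q : F) (n j : ℕ) : F :=
  wellPoised A Q (A * Q ^ (n + 1)) Q j * (qPochhammer (Q ^ j)⁻¹ Q j * qPochhammer (A * Q ^ j) Q j *
    qPochhammer (u * v / (A * Q)) Q j / (qPochhammer Q Q j * qPochhammer u Q j * qPochhammer v Q j))

lemma qPochhammer_inv_pow_mul (hQ : Q ≠ 0) (i j : ℕ) :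
    qPochhammer (Q ^ (j + i))⁻¹ Q j * ((-Q ^ (i + 1)) ^ j * ∏ m ∈ range j, Q ^ m) =
      qPochhammer (Q ^ (i + 1)) Q j := by
  rw [← prod_range_mul_pow]
  refine qPochhammer_reflect hQ ?_
  field_simp
  ring

lemma qPochhammer_inv_pow_shift (hQ : Q ≠ 0) (i j : ℕ) (hQj : qPochhammer Q Q j ≠ 0) :
    qPochhammer (Q ^ (j + i))⁻¹ Q j * Q ^ (i * j) * qPochhammer Q Q i =
      qPochhammer (Q ^ j)⁻¹ Q j * qPochhammer (Q * Q ^ j) Q i := by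
  have reflect_zero := qPochhammer_inv_pow_mul hQ 0 j
  have split : qPochhammer Q Q i * qPochhammer (Q ^ (i + 1)) Q j =
      qPochhammer Q Q j * qPochhammer (Q * Q ^ j) Q i := by
    rw [pow_succ', ← qPochhammer_add, ← qPochhammer_add, add_comm]
  rw [zero_add, pow_one, add_zero] at reflect_zero
  refine mul_right_cancel₀ hQj ?_
  calc _ = qPochhammer Q Q i * qPochhammer (Q ^ j)⁻¹ Q j * (qPochhammer (Q ^ (j + i))⁻¹ Q j *
        ((-Q ^ (i + 1)) ^ j * ∏ m ∈ range j, Q ^ m)) := by rw [← reflect_zero]; ring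
    _ = _ := by
      rw [qPochhammer_inv_pow_mul hQ]
      linear_combination qPochhammer (Q ^ j)⁻¹ Q j * split

lemma wellPoised_mul_qPochhammer_eq (hQ : Q ≠ 0) (v : F) (j i : ℕ)
    (hQji : qPochhammer Q Q (j + i) ≠ 0) :
    wellPoised (A * Q ^ (2 * j)) (Q * Q ^ j) v Q i *
        (qPochhammer (Q ^ (j + i))⁻¹ Q j * qPochhammer (A * Q ^ (j + i)) Q j) =
      qPochhammer (Q ^ j)⁻¹ Q j * qPochhammer (A * Q ^ j) Q j *
        wellPoised (A * Q ^ (2 * j)) Q v Q i := by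
  have hQi := qPochhammer_ne_zero_of_le (Nat.le_add_left i j) hQji
  have hQj := qPochhammer_ne_zero_of_le (Nat.le_add_right j i) hQji
  have hQQji := right_ne_zero_of_mul (qPochhammer_add Q Q j i ▸ hQji)
  have shift := qPochhammer_inv_pow_shift hQ i j hQj
  have split : qPochhammer (A * Q ^ j) Q i * qPochhammer (A * Q ^ (j + i)) Q j =
      qPochhammer (A * Q ^ j) Q j * qPochhammer (A * Q ^ (2 * j)) Q i := by
    rw [pow_add, two_mul, pow_add, ← mul_assoc, ← mul_assoc, ← qPochhammer_add, ← qPochhammer_add,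
      add_comm]
  have numerator : A * Q ^ (2 * j) * Q / (Q * Q ^ j) = A * Q ^ j := by
    rw [two_mul, pow_add]; field_simp
  have powers : (Q * Q ^ j * v / (A * Q ^ (2 * j) * Q)) ^ i =
      (Q * v / (A * Q ^ (2 * j) * Q)) ^ i * Q ^ (i * j) := by
    rw [mul_comm i j, pow_mul Q j i, ← mul_pow]; ring
  rw [wellPoised, wellPoised, numerator, mul_div_cancel_right₀ _ hQ, powers]
  generalize qPochhammer (A * Q ^ (2 * j) * Q / v) Q i = N
  generalize (Q * v / (A * Q ^ (2 * j) * Q)) ^ i = z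
  rw [div_mul_eq_mul_div, div_mul_eq_mul_div, div_mul_eq_mul_div, mul_div_assoc',
    mul_comm _ (qPochhammer v Q i), mul_comm _ (qPochhammer v Q i), ← div_div, ← div_div,
    div_eq_div_iff hQQji hQi]
  linear_combination N * z / qPochhammer v Q i *
    (qPochhammer (A * Q ^ j) Q i * qPochhammer (A * Q ^ (j + i)) Q j * shift +
      qPochhammer (Q ^ j)⁻¹ Q j * qPochhammer (Q * Q ^ j) Q i * split)

lemma wellPoised_mul_saalschutzTerm (hQ : Q ≠ 0) {n j i : ℕ} (hji : j + i ≤ n)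
    (hQn : qPochhammer Q Q n ≠ 0) :
    veryWellPoised A Q (j + i) * wellPoised A Q (A * Q ^ (n + 1)) Q (j + i) *
        saalschutzTerm A u v Q (j + i) j =
      baileyCoeff A u v Q n j * (veryWellPoised (A * Q ^ (2 * j)) Q i *
        wellPoised (A * Q ^ (2 * j)) Q (A * Q ^ (2 * j) * Q ^ (n - j + 1)) Q i) := by
  have hv : A * Q ^ (n + 1) * Q ^ j = A * Q ^ (2 * j) * Q ^ (n - j + 1) := by
    rw [mul_assoc, mul_assoc, ← pow_add, ← pow_add]; congr 2; omega
  have hQj := pow_ne_zero j hQ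
  have splitting := wellPoised_mul_qPochhammer_eq (A := A) hQ (A * Q ^ (n + 1) * Q ^ j) j i
    (qPochhammer_ne_zero_of_le hji hQn)
  rw [veryWellPoised_add, wellPoised_add hQ, saalschutzTerm, baileyCoeff, ← hv]
  linear_combination wellPoised A Q (A * Q ^ (n + 1)) Q j * veryWellPoised (A * Q ^ (2 * j)) Q i *
    (qPochhammer (u * v / (A * Q)) Q j /
      (qPochhammer Q Q j * qPochhammer u Q j * qPochhammer v Q j)) *
    ((Q ^ j)⁻¹ * Q ^ j * splitting + qPochhammer (Q ^ j)⁻¹ Q j * qPochhammer (A * Q ^ j) Q j *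
      wellPoised (A * Q ^ (2 * j)) Q (A * Q ^ (n + 1) * Q ^ j) Q i * inv_mul_cancel₀ hQj)

lemma sum_mul_wellPoised_eq_sum_baileyCoeff (hA : A ≠ 0) (hQ : Q ≠ 0) (hu : u ≠ 0) (hv : v ≠ 0)
    {n : ℕ} (hQn : qPochhammer Q Q n ≠ 0) (hun : qPochhammer u Q n ≠ 0)
    (hvn : qPochhammer v Q n ≠ 0) (w : ℕ → F) :
    ∑ k ∈ range (n + 1), veryWellPoised A Q k * wellPoised A Q (A * Q ^ (n + 1)) Q k *
        wellPoised A u v Q k * w k =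
      ∑ j ∈ range (n + 1), baileyCoeff A u v Q n j * ∑ i ∈ range (n - j + 1),
        veryWellPoised (A * Q ^ (2 * j)) Q i *
          wellPoised (A * Q ^ (2 * j)) Q (A * Q ^ (2 * j) * Q ^ (n - j + 1)) Q i * w (j + i) := by
  calc _ = ∑ k ∈ range (n + 1), ∑ j ∈ range (k + 1),
        veryWellPoised A Q (j + (k - j)) * wellPoised A Q (A * Q ^ (n + 1)) Q (j + (k - j)) *
          saalschutzTerm A u v Q (j + (k - j)) j * w (j + (k - j)) := by
        refine sum_congr rfl fun k hk => ?_
        have hkn : k ≤ n := Nat.lt_succ_iff.1 (mem_range.1 hk)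
        rw [← sum_saalschutzTerm hA hQ hu hv k (qPochhammer_ne_zero_of_le hkn hQn)
          (qPochhammer_ne_zero_of_le hkn hun) (qPochhammer_ne_zero_of_le hkn hvn), mul_sum, sum_mul]
        refine sum_congr rfl fun j hj => ?_
        rw [Nat.add_sub_cancel' (Nat.lt_succ_iff.1 (mem_range.1 hj))]
    _ = ∑ j ∈ range (n + 1), ∑ i ∈ range (n + 1 - j),
        veryWellPoised A Q (j + i) * wellPoised A Q (A * Q ^ (n + 1)) Q (j + i) *
          saalschutzTerm A u v Q (j + i) j * w (j + i) := sum_range_diag_flip (n + 1) fun j i =>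
        veryWellPoised A Q (j + i) * wellPoised A Q (A * Q ^ (n + 1)) Q (j + i) *
          saalschutzTerm A u v Q (j + i) j * w (j + i)
    _ = _ := by
        refine sum_congr rfl fun j hj => ?_
        have hjn : j ≤ n := Nat.lt_succ_iff.1 (mem_range.1 hj)
        rw [mul_sum, Nat.succ_sub hjn]
        refine sum_congr rfl fun i hi => ?_
        rw [wellPoised_mul_saalschutzTerm hQ (by have := mem_range.1 hi; omega) hQn]
        ring

lemma qPochhammer_inv_pow_mul_self (hQ : Q ≠ 0) (n : ℕ) :
    qPochhammer (Q ^ n)⁻¹ Q n * qPochhammer (Q ^ n)⁻¹ Q n * (Q ^ (n + 1)) ^ n =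
      qPochhammer Q Q n * qPochhammer Q Q n := by
  have reflect := qPochhammer_inv_pow_mul hQ 0 n
  rw [zero_add, pow_one, add_zero] at reflect
  calc _ = qPochhammer (Q ^ n)⁻¹ Q n * qPochhammer (Q ^ n)⁻¹ Q n * ((-Q * -Q) ^ n *
        ((∏ m ∈ range n, Q ^ m) * (∏ m ∈ range n, Q ^ m))) := by
        rw [← pow_mul, add_one_mul, pow_add, ← prod_range_pow_mul_self, neg_mul_neg]; ring
    _ = _ := by rw [← reflect, mul_pow]; ring

lemma wellPoised_terminating (hA : A ≠ 0) (hQ : Q ≠ 0) (n j : ℕ) :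
    wellPoised A Q (A * Q ^ (n + 1)) Q j = qPochhammer A Q j * qPochhammer (Q ^ n)⁻¹ Q j /
      (qPochhammer Q Q j * qPochhammer (A * Q ^ (n + 1)) Q j) * (Q ^ (n + 1)) ^ j := by
  have numerator : A * Q / (A * Q ^ (n + 1)) = (Q ^ n)⁻¹ := by rw [pow_succ]; field_simp
  have base : Q * (A * Q ^ (n + 1)) / (A * Q) = Q ^ (n + 1) := by field_simp
  rw [wellPoised, mul_div_cancel_right₀ A hQ, numerator, base]

lemma baileyCoeff_self (hA : A ≠ 0) (hQ : Q ≠ 0) {n : ℕ} (hQn : qPochhammer Q Q n ≠ 0)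
    (hAn : qPochhammer (A * Q ^ (n + 1)) Q n ≠ 0) :
    baileyCoeff A u v Q n n * (1 - A * Q ^ (2 * n)) =
      qPochhammer A Q (n + 1) * qPochhammer (u * v / (A * Q)) Q n /
        (qPochhammer u Q n * qPochhammer v Q n) := by
  have merge : qPochhammer A Q n * qPochhammer (A * Q ^ n) Q n * (1 - A * Q ^ (2 * n)) =
      qPochhammer A Q (n + 1) * qPochhammer (A * Q ^ (n + 1)) Q n := by
    rw [← qPochhammer_add, ← two_mul, ← qPochhammer_succ, ← qPochhammer_add]; congr 1; omega
  calc _ = qPochhammer A Q n * qPochhammer (A * Q ^ n) Q n * (1 - A * Q ^ (2 * n)) *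
        (qPochhammer (Q ^ n)⁻¹ Q n * qPochhammer (Q ^ n)⁻¹ Q n * (Q ^ (n + 1)) ^ n) *
          qPochhammer (u * v / (A * Q)) Q n / (qPochhammer (A * Q ^ (n + 1)) Q n *
            (qPochhammer Q Q n * qPochhammer Q Q n) * (qPochhammer u Q n * qPochhammer v Q n)) := by
        rw [baileyCoeff, wellPoised_terminating hA hQ]; ring
    _ = _ := by rw [merge, qPochhammer_inv_pow_mul_self hQ]; field_simp

lemma qPochhammer_terminating_shift_ne_zero {n j : ℕ} (hjn : j ≤ n)
    (hAn : qPochhammer (A * Q ^ (n + 1)) Q n ≠ 0) :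
    qPochhammer (A * Q ^ (2 * j) * Q ^ (n - j + 1)) Q (n - j) ≠ 0 := by
  rw [show A * Q ^ (2 * j) * Q ^ (n - j + 1) = A * Q ^ (n + 1) * Q ^ j by
    rw [mul_assoc, mul_assoc, ← pow_add, ← pow_add]; congr 2; omega]
  rw [← Nat.add_sub_cancel' hjn, qPochhammer_add, Nat.add_sub_cancel' hjn] at hAn
  exact right_ne_zero_of_mul hAn

theorem sum_terminating_six_phi_five (hA : A ≠ 0) (hQ : Q ≠ 0) (hu : u ≠ 0) (hv : v ≠ 0)
    {n : ℕ} (hQn : qPochhammer Q Q n ≠ 0) (hAn : qPochhammer (A * Q ^ (n + 1)) Q n ≠ 0)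
    (hun : qPochhammer u Q n ≠ 0) (hvn : qPochhammer v Q n ≠ 0) :
    ∑ k ∈ range (n + 1), veryWellPoised A Q k * wellPoised A Q (A * Q ^ (n + 1)) Q k *
        wellPoised A u v Q k =
      qPochhammer A Q (n + 1) * qPochhammer (u * v / (A * Q)) Q n /
        (qPochhammer u Q n * qPochhammer v Q n) := by
  have expansion := sum_mul_wellPoised_eq_sum_baileyCoeff hA hQ hu hv hQn hun hvn fun _ => 1
  simp only [mul_one] at expansion
  rw [expansion, sum_range_succ, sum_eq_zero, zero_add, Nat.sub_self, zero_add, sum_range_one,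
    veryWellPoised_zero, wellPoised_zero, mul_one, baileyCoeff_self hA hQ hQn hAn]
  intro j hj
  have hjn : j < n := mem_range.1 hj
  rw [sum_veryWellPoised_mul_wellPoised_eq_ite (mul_ne_zero hA (pow_ne_zero _ hQ)) hQ,
    if_neg (Nat.sub_ne_zero_of_lt hjn), mul_zero]
  · exact qPochhammer_ne_zero_of_le (Nat.sub_le n j) hQn
  · exact qPochhammer_terminating_shift_ne_zero hjn.le hAn

/-- The `j`-th term of the balanced series into which Watson's transformation turns a terminating
very-well-poised series; the leading factors are those that can vanish at roots of unity. -/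
def watsonTerm (A u v u' v' Q : F) (n j : ℕ) : F :=
  qPochhammer A Q (n + j + 1) * qPochhammer (u * v / (A * Q)) Q j *
    qPochhammer (u' * v' / (A * Q)) Q (n - j) *
    (qPochhammer (Q ^ n)⁻¹ Q j * qPochhammer (Q ^ j)⁻¹ Q j * (Q ^ (n + 1)) ^ j *
      (qPochhammer (A * Q / u') Q j * qPochhammer (A * Q / v') Q j * (u' * v' / (A * Q)) ^ j) /
      (qPochhammer Q Q j ^ 2 * qPochhammer (A * Q ^ (n + 1)) Q j *
        (qPochhammer u Q j * qPochhammer v Q j * (qPochhammer u' Q n * qPochhammer v' Q n))))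

lemma baileyCoeff_mul_eq_watsonTerm (hA : A ≠ 0) (hQ : Q ≠ 0) {n j : ℕ} (hjn : j ≤ n) :
    baileyCoeff A u v Q n j * (wellPoised A u' v' Q j *
        (qPochhammer (A * Q ^ (2 * j)) Q (n - j + 1) * qPochhammer (u' * v' / (A * Q)) Q (n - j) /
          (qPochhammer (u' * Q ^ j) Q (n - j) * qPochhammer (v' * Q ^ j) Q (n - j)))) =
      watsonTerm A u v u' v' Q n j := by
  have merge : qPochhammer A Q (n + j + 1) = qPochhammer A Q j * qPochhammer (A * Q ^ j) Q j *
      qPochhammer (A * Q ^ (2 * j)) Q (n - j + 1) := by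
    rw [← qPochhammer_add, ← two_mul, ← qPochhammer_add]; congr 1; omega
  have split (x : F) :
      qPochhammer x Q n = qPochhammer x Q j * qPochhammer (x * Q ^ j) Q (n - j) := by
    rw [← qPochhammer_add, Nat.add_sub_cancel' hjn]
  rw [baileyCoeff, wellPoised_terminating hA hQ, wellPoised, watsonTerm, merge, split u', split v']
  simp only [div_eq_mul_inv, mul_inv]
  ring

theorem watson_transformation (hA : A ≠ 0) (hQ : Q ≠ 0) (hu : u ≠ 0) (hv : v ≠ 0)
    (hu' : u' ≠ 0) (hv' : v' ≠ 0) {n : ℕ} (hQn : qPochhammer Q Q n ≠ 0)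
    (hAn : qPochhammer (A * Q ^ (n + 1)) Q n ≠ 0)
    (hun : qPochhammer u Q n ≠ 0) (hvn : qPochhammer v Q n ≠ 0)
    (hun' : qPochhammer u' Q n ≠ 0) (hvn' : qPochhammer v' Q n ≠ 0) :
    ∑ k ∈ range (n + 1), veryWellPoised A Q k * wellPoised A Q (A * Q ^ (n + 1)) Q k *
        wellPoised A u v Q k * wellPoised A u' v' Q k =
      ∑ j ∈ range (n + 1), watsonTerm A u v u' v' Q n j := by
  rw [sum_mul_wellPoised_eq_sum_baileyCoeff hA hQ hu hv hQn hun hvn]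
  refine sum_congr rfl fun j hj => ?_
  have hjn : j ≤ n := Nat.lt_succ_iff.1 (mem_range.1 hj)
  have hQj : Q ^ j ≠ 0 := pow_ne_zero j hQ
  have tail_ne_zero {x : F} (hx : qPochhammer x Q n ≠ 0) : qPochhammer (x * Q ^ j) Q (n - j) ≠ 0 :=
    right_ne_zero_of_mul (qPochhammer_add x Q j (n - j) ▸ (Nat.add_sub_cancel' hjn).symm ▸ hx)
  have base : u' * Q ^ j * (v' * Q ^ j) / (A * Q ^ (2 * j) * Q) = u' * v' / (A * Q) := by
    rw [two_mul, pow_add]; field_simp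
  have inner := sum_terminating_six_phi_five (mul_ne_zero hA (pow_ne_zero (2 * j) hQ)) hQ
    (mul_ne_zero hu' hQj) (mul_ne_zero hv' hQj)
    (qPochhammer_ne_zero_of_le (Nat.sub_le n j) hQn)
    (qPochhammer_terminating_shift_ne_zero hjn hAn) (tail_ne_zero hun') (tail_ne_zero hvn')
  rw [← baileyCoeff_mul_eq_watsonTerm hA hQ hjn, ← base, ← inner,
    mul_sum _ _ (wellPoised A u' v' Q j)]
  refine congrArg _ (sum_congr rfl fun i _ => ?_)
  rw [wellPoised_add hQ]
  ring

end Watson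

section Residue

variable {S L κ ι : Type*} [CommRing S] [Field L] [Algebra S L] [Field κ]

/-- `HasResidue φ x y` says that the fraction `x` is regular at the prime `ker φ` and that `y` is
its value there, i.e. its image under the extension of `φ` to the localization at `ker φ`. -/
def HasResidue (φ : S →+* κ) (x : L) (y : κ) : Prop :=
  ∃ f g : S, φ g ≠ 0 ∧ x * algebraMap S L g = algebraMap S L f ∧ y * φ g = φ f

namespace HasResidue

variable {φ : S →+* κ} {x x' : L} {y y' : κ}

lemma of_algebraMap (φ : S →+* κ) (f : S) : HasResidue φ (algebraMap S L f) (φ f) :=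
  ⟨f, 1, by simp, by simp, by simp⟩

lemma zero : HasResidue φ (0 : L) 0 := by simpa using of_algebraMap (L := L) φ 0

lemma one : HasResidue φ (1 : L) 1 := by simpa using of_algebraMap (L := L) φ 1

lemma add (h : HasResidue φ x y) (h' : HasResidue φ x' y') : HasResidue φ (x + x') (y + y') := by
  obtain ⟨f, g, hg, hx, hy⟩ := h
  obtain ⟨f', g', hg', hx', hy'⟩ := h'
  refine ⟨f * g' + f' * g, g * g', by simp [hg, hg'], ?_, ?_⟩
  · simp only [map_mul, map_add, ← hx, ← hx']; ring
  · simp only [map_mul, map_add, ← hy, ← hy']; ring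

lemma mul (h : HasResidue φ x y) (h' : HasResidue φ x' y') : HasResidue φ (x * x') (y * y') := by
  obtain ⟨f, g, hg, hx, hy⟩ := h
  obtain ⟨f', g', hg', hx', hy'⟩ := h'
  refine ⟨f * f', g * g', by simp [hg, hg'], ?_, ?_⟩
  · simp only [map_mul, ← hx, ← hx']; ring
  · simp only [map_mul, ← hy, ← hy']; ring

lemma sub (h : HasResidue φ x y) (h' : HasResidue φ x' y') : HasResidue φ (x - x') (y - y') := by
  simpa [← sub_eq_add_neg] using h.add ((of_algebraMap φ (-1)).mul h')

lemma pow (h : HasResidue φ x y) (k : ℕ) : HasResidue φ (x ^ k) (y ^ k) := by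
  induction k with
  | zero => simpa only [pow_zero] using one
  | succ k ih => simpa only [pow_succ] using ih.mul h

lemma sum {s : Finset ι} {x : ι → L} {y : ι → κ} (h : ∀ i ∈ s, HasResidue φ (x i) (y i)) :
    HasResidue φ (∑ i ∈ s, x i) (∑ i ∈ s, y i) := by
  classical
  induction s using Finset.induction_on with
  | empty => simpa only [sum_empty] using zero
  | insert i s hi ih =>
    rw [sum_insert hi, sum_insert hi]
    exact (h i (mem_insert_self i s)).add (ih fun j hj => h j (mem_insert_of_mem hj))

lemma prod {s : Finset ι} {x : ι → L} {y : ι → κ} (h : ∀ i ∈ s, HasResidue φ (x i) (y i)) :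
    HasResidue φ (∏ i ∈ s, x i) (∏ i ∈ s, y i) := by
  classical
  induction s using Finset.induction_on with
  | empty => simpa only [prod_empty] using one
  | insert i s hi ih =>
    rw [prod_insert hi, prod_insert hi]
    exact (h i (mem_insert_self i s)).mul (ih fun j hj => h j (mem_insert_of_mem hj))

lemma qPochhammer (hx : HasResidue φ x y) {Q : L} {Q' : κ} (hQ : HasResidue φ Q Q')
    (k : ℕ) : HasResidue φ (qPochhammer x Q k) (qPochhammer y Q' k) :=
  prod fun i _ => one.sub (hx.mul (hQ.pow i))

variable [IsFractionRing S L]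

lemma mul_map_eq (h : HasResidue φ x y) {f g : S} (hx : x * algebraMap S L g = algebraMap S L f) :
    y * φ g = φ f := by
  obtain ⟨f', g', hg', hx', hy'⟩ := h
  have cross : f' * g = f * g' := IsFractionRing.injective S L (by
    rw [map_mul, map_mul, ← hx, ← hx']; ring)
  refine mul_right_cancel₀ hg' ?_
  rw [mul_right_comm, hy', ← map_mul, ← map_mul, cross]

lemma ne_zero (h : HasResidue φ x y) (hy : y ≠ 0) : x ≠ 0 := by
  rintro rfl
  exact hy (by simpa using h.mul_map_eq (f := 0) (g := 1) (by simp))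

lemma inv (h : HasResidue φ x y) (hy : y ≠ 0) : HasResidue φ x⁻¹ y⁻¹ := by
  have hx := h.ne_zero hy
  obtain ⟨f, g, hg, hxf, hyf⟩ := h
  exact ⟨g, f, hyf ▸ mul_ne_zero hy hg, by rw [← hxf, inv_mul_cancel_left₀ hx],
    by rw [← hyf, inv_mul_cancel_left₀ hy]⟩

lemma div (h : HasResidue φ x y) (h' : HasResidue φ x' y') (hy' : y' ≠ 0) :
    HasResidue φ (x / x') (y / y') := by
  simpa only [div_eq_mul_inv] using h.mul (h'.inv hy')

lemma one_sub_pow_div_one_sub_pow [CharZero κ] (hx : HasResidue φ x 1) (hx1 : x ≠ 1) (α : ℕ) {β : ℕ}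
    (hβ : β ≠ 0) : HasResidue φ ((1 - x ^ α) / (1 - x ^ β)) (α / β) := by
  have geom (e : ℕ) : HasResidue φ (∑ i ∈ range e, x ^ i) (e : κ) := by
    simpa using sum (s := range e) (φ := φ) fun i _ => hx.pow i
  simpa only [← mul_neg_geom_sum, mul_div_mul_left _ _ (sub_ne_zero.2 hx1.symm)] using
    (geom α).div (geom β) (Nat.cast_ne_zero.2 hβ)

variable {A u v Q : L} {A' u' v' Q' : κ}

lemma wellPoised (hA : HasResidue φ A A') (hu : HasResidue φ u u') (hv : HasResidue φ v v')
    (hQ : HasResidue φ Q Q') (hA' : A' ≠ 0) (hu' : u' ≠ 0) (hv' : v' ≠ 0) (hQ' : Q' ≠ 0) {k : ℕ}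
    (huk : _root_.qPochhammer u' Q' k ≠ 0) (hvk : _root_.qPochhammer v' Q' k ≠ 0) :
    HasResidue φ (wellPoised A u v Q k) (wellPoised A' u' v' Q' k) :=
  ((((hA.mul hQ).div hu hu').qPochhammer hQ k).mul (((hA.mul hQ).div hv hv').qPochhammer hQ k)
    |>.div ((hu.qPochhammer hQ k).mul (hv.qPochhammer hQ k)) (mul_ne_zero huk hvk)).mul
    (((hu.mul hv).div (hA.mul hQ) (mul_ne_zero hA' hQ')).pow k)

lemma veryWellPoised (hA : HasResidue φ A A') (hQ : HasResidue φ Q Q') (hQ' : Q' ≠ 0) (k : ℕ) :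
    HasResidue φ (veryWellPoised A Q k) (veryWellPoised A' Q' k) :=
  (one.sub (hA.mul (hQ.pow _))).div (hQ.pow k) (pow_ne_zero k hQ')

end HasResidue

/-- `DvdAt φ M x` says that `M` divides the fraction `x` in the localization at `ker φ`. -/
def DvdAt (φ : S →+* κ) (M : S) (x : L) : Prop :=
  ∃ (z : L) (y : κ), HasResidue φ z y ∧ x = algebraMap S L M * z

variable {φ : S →+* κ} {x x' : L} {y : κ} {p M M' : S}

lemma HasResidue.dvdAt [IsFractionRing S L] (hφ : RingHom.ker φ = Ideal.span {p})
    (h : HasResidue φ x 0) : DvdAt φ p x := by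
  obtain ⟨f, g, hg, hx, hf⟩ := h
  obtain ⟨f', rfl⟩ : p ∣ f := by
    rw [← Ideal.mem_span_singleton, ← hφ, RingHom.mem_ker, ← hf, zero_mul]
  have hgL : algebraMap S L g ≠ 0 := (of_algebraMap φ g).ne_zero hg
  refine ⟨algebraMap S L f' / algebraMap S L g, _,
    (of_algebraMap φ f').div (of_algebraMap φ g) hg, ?_⟩
  rw [← mul_div_assoc, ← map_mul, eq_div_iff hgL, hx]

namespace DvdAt

lemma mul (h : DvdAt φ M x) (h' : DvdAt φ M' x') : DvdAt φ (M * M') (x * x') := by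
  obtain ⟨z, y, hz, rfl⟩ := h
  obtain ⟨z', y', hz', rfl⟩ := h'
  exact ⟨z * z', y * y', hz.mul hz', by rw [map_mul]; ring⟩

lemma mul_hasResidue (h : DvdAt φ M x) (h' : HasResidue φ x' y) : DvdAt φ M (x * x') := by
  simpa using h.mul (M' := 1) ⟨x', y, h', by simp⟩

lemma add (h : DvdAt φ M x) (h' : DvdAt φ M x') : DvdAt φ M (x + x') := by
  obtain ⟨z, y, hz, rfl⟩ := h
  obtain ⟨z', y', hz', rfl⟩ := h'
  exact ⟨z + z', y + y', hz.add hz', (mul_add _ _ _).symm⟩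

lemma sum {s : Finset ι} {x : ι → L} (h : ∀ i ∈ s, DvdAt φ M (x i)) :
    DvdAt φ M (∑ i ∈ s, x i) := by
  choose! z y hz hx using h
  exact ⟨_, _, HasResidue.sum hz, by rw [mul_sum, sum_congr rfl hx]⟩

/-- Writing `x = p f' / g`, the second factor `p` comes from `σ (f' / g) ≡ τ (f' / g)`. -/
lemma sub_of_specializations [IsFractionRing S L] (hφ : RingHom.ker φ = Ideal.span {p})
    {σ τ : S →+* S} (hσ : σ p = p) (hτ : τ p = p) (hστ : φ.comp σ = φ.comp τ) {xσ xτ : L}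
    (hx : HasResidue φ x 0) (hreg : HasResidue (φ.comp σ) x y)
    (hxσ : HasResidue ((algebraMap S L).comp σ) x xσ)
    (hxτ : HasResidue ((algebraMap S L).comp τ) x xτ) : DvdAt φ (p ^ 2) (xσ - xτ) := by
  obtain ⟨f, g, hg, hxf, -⟩ := hreg
  obtain ⟨f', rfl⟩ : p ∣ f := by
    rw [← Ideal.mem_span_singleton, ← hφ, RingHom.mem_ker, ← hx.mul_map_eq hxf, zero_mul]
  have agree (s : S) : φ (σ s) = φ (τ s) := RingHom.congr_fun hστ s
  have hσg : φ (σ g) ≠ 0 := hg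
  have hτg : φ (τ g) ≠ 0 := agree g ▸ hσg
  have ne_zero {s : S} (hs : φ s ≠ 0) : algebraMap S L s ≠ 0 :=
    (HasResidue.of_algebraMap (L := L) φ s).ne_zero hs
  have eqσ := hxσ.mul_map_eq hxf
  have eqτ := hxτ.mul_map_eq hxf
  simp only [RingHom.comp_apply, map_mul, hσ, hτ] at eqσ eqτ
  have cross : φ (σ f' * τ g - τ f' * σ g) = 0 := by
    simp only [map_sub, map_mul, agree]; ring
  obtain ⟨z, w, hz, eqz⟩ : DvdAt φ p (algebraMap S L (σ f' * τ g - τ f' * σ g)) :=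
    HasResidue.dvdAt hφ (cross ▸ HasResidue.of_algebraMap φ _)
  refine ⟨z / algebraMap S L (σ g * τ g), _, hz.div (HasResidue.of_algebraMap φ _) (by
    rw [map_mul]; exact mul_ne_zero hσg hτg), ?_⟩
  have hσL := ne_zero hσg
  have hτL := ne_zero hτg
  rw [← mul_div_assoc, map_mul (algebraMap S L) (σ g), eq_div_iff (mul_ne_zero hσL hτL), sq,
    map_mul, mul_assoc (algebraMap S L p) _ z, ← eqz]
  simp only [map_sub, map_mul]
  linear_combination algebraMap S L (τ g) * eqσ - algebraMap S L (σ g) * eqτ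

end DvdAt

end Residue

section Congruence

variable {M : R} {x : K}

lemma modCong_iff_dvd_num : modCong M x ↔ M ∣ IsFractionRing.num R x := by
  have hx : x * algebraMap R K (IsFractionRing.den R x) = algebraMap R K (IsFractionRing.num R x) :=
    IsFractionRing.num_mul_den_eq_num_iff_eq.2 rfl
  constructor
  · rintro ⟨f, g, hg, hMg, hxg⟩
    have coprime : IsRelPrime M g :=
      (UniqueFactorizationMonoid.isRelPrime_iff_no_prime_factors hg).2
        (fun p hpg hpM hp => hMg p hp hpM hpg) |>.symm
    refine coprime.dvd_of_dvd_mul_right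
      ⟨f * IsFractionRing.den R x, IsFractionRing.injective R K ?_⟩
    rw [map_mul, ← hx, mul_right_comm, hxg]
    simp only [map_mul, mul_assoc]
  · rintro ⟨f, hf⟩
    refine ⟨f, IsFractionRing.den R x, nonZeroDivisors.ne_zero (Subtype.prop _), ?_, hf ▸ hx⟩
    exact fun p hp hpM hpd =>
      hp.not_isUnit (IsFractionRing.num_den_reduced R x (hpM.trans ⟨f, hf⟩) hpd)

lemma modCong_prod {ι : Type*} {s : Finset ι} {M : ι → R}
    (hM : (s : Set ι).Pairwise (Function.onFun IsRelPrime M)) (h : ∀ i ∈ s, modCong (M i) x) :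
    modCong (∏ i ∈ s, M i) x :=
  modCong_iff_dvd_num.2 <| prod_dvd_of_isRelPrime hM fun i hi => modCong_iff_dvd_num.1 (h i hi)

lemma DvdAt.modCong_pow {κ : Type*} [Field κ] {φ : R →+* κ} {p : R} {e : ℕ} (hp : Prime p)
    (hφ : RingHom.ker φ = Ideal.span {p}) (h : DvdAt φ (p ^ e) x) : modCong (p ^ e) x := by
  obtain ⟨z, y, ⟨f, g, hg, hz, -⟩, rfl⟩ := h
  refine ⟨f, g, fun h => hg (h ▸ map_zero φ), fun r hr hrp hrg => hg ?_, ?_⟩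
  · have hpr : p ∣ r := (hr.dvd_prime_iff_associated hp).1 (hr.dvd_of_dvd_pow hrp) |>.symm.dvd
    rw [← RingHom.mem_ker, hφ]
    exact Ideal.mem_span_singleton.2 (hpr.trans hrg)
  · rw [mul_assoc, hz, map_mul]

end Congruence

section Cyclotomic

open MvPolynomial (X)

variable {m m' : ℕ}

lemma Phi_eq_aeval : Phi m = Polynomial.aeval (X 0 : R) (Polynomial.cyclotomic m ℚ) := rfl

lemma prime_Phi (hm : 0 < m) : Prime (Phi m) := by
  let e := MvPolynomial.uniqueAlgEquiv ℚ ({0} : Set (Fin 4))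
  have factor : (Polynomial.aeval (X 0 : R) : Polynomial ℚ →ₐ[ℚ] R) =
      (MvPolynomial.rename (R := ℚ) ((↑) : ({0} : Set (Fin 4)) → Fin 4)).comp e.symm.toAlgHom := by
    ext; simp [e]
  rw [Phi_eq_aeval, factor]
  exact (MvPolynomial.prime_rename_iff _).2 <| (MulEquiv.prime_iff e.symm.toMulEquiv).2
    (Polynomial.cyclotomic.irreducible_rat hm).prime

lemma isRelPrime_Phi (h : m ≠ m') : IsRelPrime (Phi m) (Phi m') :=
  ((Polynomial.cyclotomic.isCoprime_rat h).map (Polynomial.aeval (X 0 : R)).toRingHom).isRelPrime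

lemma qintR_eq_prod_Phi {n : ℕ} (hn : 0 < n) : qintR n = ∏ m ∈ n.divisors.erase 1, Phi m := by
  simpa [Phi_eq_aeval, qintR] using
    (congrArg (Polynomial.aeval (X 0 : R)) (Polynomial.prod_cyclotomic_eq_geom_sum hn ℚ)).symm

lemma exists_ker_eq_span_Phi (hm : 0 < m) :
    ∃ (κ : Type) (_ : Field κ) (_ : CharZero κ) (φ : R →+* κ),
      RingHom.ker φ = Ideal.span {Phi m} := by
  have : (Ideal.span {Phi m}).IsPrime :=
    (Ideal.span_singleton_prime (prime_Phi hm).ne_zero).2 (prime_Phi hm)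
  exact ⟨(Ideal.span {Phi m}).ResidueField, inferInstance, algebraRat.charZero _, algebraMap _ _,
    Ideal.ker_algebraMap_residueField _⟩

lemma qv_pow_ne_one (hm : 0 < m) : qv ^ m ≠ 1 := by
  have transcendental : Transcendental ℚ qv :=
    (transcendental_algebraMap_iff (IsFractionRing.injective R K)).2
      (MvPolynomial.transcendental_X ℚ 0)
  exact fun h => transcendental (.of_pow hm (h ▸ isAlgebraic_one))

variable {κ : Type*} [Field κ] [CharZero κ] {φ : R →+* κ}

lemma map_Phi (φ : R →+* κ) : φ (Phi m) = (Polynomial.cyclotomic m κ).eval (φ (X 0)) := by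
  rw [Phi, Polynomial.hom_eval₂, Subsingleton.elim (φ.comp _) (algebraMap ℚ κ),
    ← Polynomial.map_cyclotomic m (algebraMap ℚ κ), Polynomial.eval_map]

lemma isPrimitiveRoot_map_X_zero (hφ : RingHom.ker φ = Ideal.span {Phi m}) (hm : 0 < m) :
    IsPrimitiveRoot (φ (X 0)) m := by
  have : NeZero (m : κ) := ⟨Nat.cast_ne_zero.2 hm.ne'⟩
  have : Phi m ∈ RingHom.ker φ := hφ ▸ Ideal.mem_span_singleton_self _
  rwa [RingHom.mem_ker, map_Phi, ← Polynomial.IsRoot.def, Polynomial.isRoot_cyclotomic_iff] at this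

lemma transcendental_map_X (hφ : RingHom.ker φ = Ideal.span {Phi m}) {i : Fin 4} (hi : i ≠ 0) :
    Transcendental ℚ (φ (X i)) := by
  rw [transcendental_iff]
  intro f hf
  have hφf : φ (Polynomial.aeval (X i) f) = 0 := by
    rw [← hf, Polynomial.aeval_def, Polynomial.aeval_def, Polynomial.hom_eval₂,
      Subsingleton.elim (φ.comp _) (algebraMap ℚ κ)]
  obtain ⟨g, hg⟩ : Phi m ∣ Polynomial.aeval (X i : R) f := by
    rwa [← Ideal.mem_span_singleton, ← hφ]
  refine Polynomial.funext fun t => ?_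
  let ψ : R →ₐ[ℚ] κ := MvPolynomial.aeval fun j => if j = 0 then φ (X 0) else algebraMap ℚ κ t
  have hψ : ψ (Phi m) = 0 := by
    have h0 : ψ (X 0) = φ (X 0) := by simp [ψ]
    have : φ (Phi m) = 0 := by rw [← RingHom.mem_ker, hφ]; exact Ideal.mem_span_singleton_self _
    rwa [← AlgHom.coe_toRingHom, map_Phi, AlgHom.coe_toRingHom, h0, ← map_Phi]
  have hψi : ψ (X i) = algebraMap ℚ κ t := by simp [ψ, hi]
  have hψf := congrArg ψ hg
  rw [map_mul, hψ, zero_mul, ← Polynomial.aeval_algHom_apply, hψi,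
    Polynomial.aeval_algebraMap_apply, map_eq_zero] at hψf
  simpa using hψf

end Cyclotomic

/-- `1 - q` times the `k`-th summand of the theorem, with `Q` for `q ^ d` and with one of the two
quotients `(q; Q)_k / (Q; Q)_k` deformed to `(q / c; Q)_k / (c Q; Q)_k`; the theorem has `c = 1`. -/
def summand {F : Type*} [Field F] (q Q a b c : F) (k : ℕ) : F :=
  veryWellPoised q Q k * wellPoised q Q (c * Q) Q k * wellPoised q (Q / a) (a * Q) Q k *
    wellPoised q (Q / b) (b * Q) Q k

/-- None of the denominators in `summand q Q a b c k` vanishes. -/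
structure SummandRegular {F : Type*} [Field F] (q Q a b c : F) (k : ℕ) : Prop where
  q_ne_zero : q ≠ 0
  Q_ne_zero : Q ≠ 0
  a_ne_zero : a ≠ 0
  b_ne_zero : b ≠ 0
  c_ne_zero : c ≠ 0
  self : qPochhammer Q Q k ≠ 0
  c_mul : qPochhammer (c * Q) Q k ≠ 0
  div_a : qPochhammer (Q / a) Q k ≠ 0
  a_mul : qPochhammer (a * Q) Q k ≠ 0
  div_b : qPochhammer (Q / b) Q k ≠ 0
  b_mul : qPochhammer (b * Q) Q k ≠ 0

section Summand

variable {F : Type*} [Field F] {q Q a b c : F} {k m r : ℕ}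

lemma wellPoised_eq_zero {A u v : F} {i : ℕ} (hi : i < k)
    (h : A * Q / u * Q ^ i = 1 ∨ A * Q / v * Q ^ i = 1) : wellPoised A u v Q k = 0 := by
  rcases h with h | h <;> simp [wellPoised, qPochhammer_eq_zero hi h]

lemma summand_eq_zero (hQ : Q ≠ 0) (hq : q * Q ^ r = 1) (hrk : r < k) :
    summand q Q a b c k = 0 := by
  have : wellPoised q Q (c * Q) Q k = 0 :=
    wellPoised_eq_zero hrk (.inl (by rwa [mul_div_cancel_right₀ _ hQ]))
  simp [summand, this]

lemma summand_terminating_eq_zero (hq : q ≠ 0) (hQ : Q ≠ 0) (hrk : r < k) :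
    summand q Q a b (q * Q ^ r) k = 0 := by
  have : wellPoised q Q (q * Q ^ r * Q) Q k = 0 := wellPoised_eq_zero hrk (.inr (by field_simp))
  simp [summand, this]

lemma sum_range_eq_sum_range_succ {f : ℕ → F} (hrm : r < m) (hf : ∀ k, r < k → f k = 0) :
    ∑ k ∈ range m, f k = ∑ k ∈ range (r + 1), f k :=
  (sum_subset (range_subset_range.2 hrm) fun k _ hk => hf k (by simpa using hk)).symm

lemma qPochhammer_ne_zero_of_pow_ne_one {x : F} (hQ : Q ^ m = 1) (hx : x ^ m ≠ 1) (k : ℕ) :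
    qPochhammer x Q k ≠ 0 :=
  qPochhammer_ne_zero fun i _ h => hx <| by
    simpa [mul_pow, pow_right_comm Q i m, hQ] using congrArg (· ^ m) h

lemma qPochhammer_self_ne_zero (hQ : IsPrimitiveRoot Q m) (hk : k < m) : qPochhammer Q Q k ≠ 0 :=
  qPochhammer_ne_zero fun i hi => by
    rw [← pow_succ']
    exact hQ.pow_ne_one_of_pos_of_lt i.succ_ne_zero (by omega)

lemma summandRegular_of_isPrimitiveRoot (hq : q ^ m = 1) (hQ : IsPrimitiveRoot Q m) (ha : a ≠ 0)
    (ham : a ^ m ≠ 1) (hb : b ≠ 0) (hbm : b ^ m ≠ 1) (hc : c ≠ 0) (hcm : c = 1 ∨ c ^ m ≠ 1)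
    (hk : k < m) : SummandRegular q Q a b c k := by
  have regular {x : F} (hx : x ^ m ≠ 1) := qPochhammer_ne_zero_of_pow_ne_one hQ.pow_eq_one hx k
  have hm : m ≠ 0 := by omega
  refine ⟨fun h => ?_, hQ.ne_zero hm, ha, hb, hc, qPochhammer_self_ne_zero hQ hk, ?_,
    regular ?_, regular ?_, regular ?_, regular ?_⟩
  · simp [h, hm] at hq
  · rcases hcm with rfl | hcm
    · simpa using qPochhammer_self_ne_zero hQ hk
    · exact regular (by simpa [mul_pow, hQ.pow_eq_one])
  all_goals simpa [mul_pow, div_pow, hQ.pow_eq_one]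

/-- The reflection `k ↦ r - k`, where `q * Q ^ r = 1`, changes the sign of `summand q Q a b c k`. -/
lemma sum_summand_eq_zero [CharZero F] (hq : q ^ m = 1) (hQ : IsPrimitiveRoot Q m) (hm : 0 < m)
    (hreg : ∀ k < m, SummandRegular q Q a b c k) : ∑ k ∈ range m, summand q Q a b c k = 0 := by
  have : NeZero m := ⟨hm.ne'⟩
  obtain ⟨r, hrm, hr⟩ := hQ.eq_pow_of_pow_eq_one (ξ := q⁻¹) (by rw [inv_pow, hq, inv_one])
  have ⟨hq0, hQ0, ha, hb, hc, _, _, _, _, _, _⟩ := hreg r hrm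
  have hqr : q * Q ^ r = 1 := by rw [hr, mul_inv_cancel₀ hq0]
  rw [sum_range_eq_sum_range_succ hrm fun k => summand_eq_zero hQ0 hqr]
  simp only [summand, mul_assoc]
  refine sum_veryWellPoised_mul_eq_zero hQ0 hqr fun k hk => ?_
  have hA : q * Q ^ (k + (r - k)) = 1 := by rwa [Nat.add_sub_cancel' hk]
  have regk := hreg k (by omega)
  have regl := hreg (r - k) (by omega)
  rw [wellPoised_reflect hQ0 hQ0 (mul_ne_zero hc hQ0) hA regk.self regk.c_mul regl.self regl.c_mul,
    wellPoised_reflect hQ0 (div_ne_zero hQ0 ha) (mul_ne_zero ha hQ0) hA regk.div_a regk.a_mul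
      regl.div_a regl.a_mul,
    wellPoised_reflect hQ0 (div_ne_zero hQ0 hb) (mul_ne_zero hb hQ0) hA regk.div_b regk.b_mul
      regl.div_b regl.b_mul]

lemma sum_summand_terminating_eq_sum_watsonTerm (hreg : SummandRegular q Q a b (q * Q ^ r) r)
    (hrm : r < m) :
    ∑ k ∈ range m, summand q Q a b (q * Q ^ r) k =
      ∑ j ∈ range (r + 1), watsonTerm q (Q / a) (a * Q) (Q / b) (b * Q) Q r j := by
  obtain ⟨hq, hQ, ha, hb, -, hself, hcmul, hdiva, hamul, hdivb, hbmul⟩ := hreg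
  rw [mul_assoc, ← pow_succ] at hcmul
  rw [sum_range_eq_sum_range_succ hrm fun k => summand_terminating_eq_zero hq hQ,
    ← watson_transformation hq hQ (div_ne_zero hQ ha) (mul_ne_zero ha hQ) (div_ne_zero hQ hb)
      (mul_ne_zero hb hQ) hself hcmul hdiva hamul hdivb hbmul]
  simp only [summand, mul_assoc, pow_succ]

end Summand

section SummandResidue

variable {S L κ : Type*} [CommRing S] [Field L] [Algebra S L] [IsFractionRing S L] [Field κ]
  {φ : S →+* κ} {q Q a b c : L} {q' Q' a' b' c' : κ} {k r : ℕ}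

lemma HasResidue.summandRegular (hq : HasResidue φ q q') (hQ : HasResidue φ Q Q')
    (ha : HasResidue φ a a') (hb : HasResidue φ b b') (hc : HasResidue φ c c')
    (h : SummandRegular q' Q' a' b' c' k) : SummandRegular q Q a b c k where
  q_ne_zero := hq.ne_zero h.q_ne_zero
  Q_ne_zero := hQ.ne_zero h.Q_ne_zero
  a_ne_zero := ha.ne_zero h.a_ne_zero
  b_ne_zero := hb.ne_zero h.b_ne_zero
  c_ne_zero := hc.ne_zero h.c_ne_zero
  self := (hQ.qPochhammer hQ k).ne_zero h.self
  c_mul := ((hc.mul hQ).qPochhammer hQ k).ne_zero h.c_mul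
  div_a := ((hQ.div ha h.a_ne_zero).qPochhammer hQ k).ne_zero h.div_a
  a_mul := ((ha.mul hQ).qPochhammer hQ k).ne_zero h.a_mul
  div_b := ((hQ.div hb h.b_ne_zero).qPochhammer hQ k).ne_zero h.div_b
  b_mul := ((hb.mul hQ).qPochhammer hQ k).ne_zero h.b_mul

lemma HasResidue.wellPoised_div_mul (hq : HasResidue φ q q') (hQ : HasResidue φ Q Q')
    (ha : HasResidue φ a a') (hq' : q' ≠ 0) (hQ' : Q' ≠ 0) (ha' : a' ≠ 0)
    (hdiv : _root_.qPochhammer (Q' / a') Q' k ≠ 0) (hmul : _root_.qPochhammer (a' * Q') Q' k ≠ 0) :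
    HasResidue φ (_root_.wellPoised q (Q / a) (a * Q) Q k)
      (_root_.wellPoised q' (Q' / a') (a' * Q') Q' k) :=
  hq.wellPoised (hQ.div ha ha') (ha.mul hQ) hQ hq' (div_ne_zero hQ' ha') (mul_ne_zero ha' hQ') hQ'
    hdiv hmul

lemma HasResidue.summand (hq : HasResidue φ q q') (hQ : HasResidue φ Q Q')
    (ha : HasResidue φ a a') (hb : HasResidue φ b b') (hc : HasResidue φ c c')
    (h : SummandRegular q' Q' a' b' c' k) :
    HasResidue φ (summand q Q a b c k) (summand q' Q' a' b' c' k) :=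
  (((hq.veryWellPoised hQ h.Q_ne_zero k).mul
    (hq.wellPoised hQ (hc.mul hQ) hQ h.q_ne_zero h.Q_ne_zero (mul_ne_zero h.c_ne_zero h.Q_ne_zero)
      h.Q_ne_zero h.self h.c_mul)).mul
    (hq.wellPoised_div_mul hQ ha h.q_ne_zero h.Q_ne_zero h.a_ne_zero h.div_a h.a_mul)).mul
    (hq.wellPoised_div_mul hQ hb h.q_ne_zero h.Q_ne_zero h.b_ne_zero h.div_b h.b_mul)

end SummandResidue

section Blocks

variable {S L κ : Type*} [CommRing S] [Field L] [Algebra S L] [IsFractionRing S L] [Field κ]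
  {φ : S →+* κ} {q a b : L} {q' a' b' : κ} {m d : ℕ}

lemma exists_lt_dvd_one_add_mul (hm : 0 < m) (hmd : m.Coprime d) : ∃ r < m, m ∣ 1 + d * r := by
  obtain ⟨r, hrm, hr⟩ := Nat.exists_mul_mod_eq_of_coprime (m - 1) hmd.symm hm.ne'
  exact ⟨r, hrm, Nat.dvd_of_mod_eq_zero (by
    rw [Nat.add_mod, hr, ← Nat.add_mod, Nat.add_sub_cancel' hm, Nat.mod_self])⟩

/-- The numerator and the denominator have one factor each that vanishes at `φ`. Both factors have
the form `1 - (q ^ m) ^ e`, and their quotient is regular. -/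
lemma exists_hasResidue_qPochhammer_div_block [CharZero κ] (hq : HasResidue φ q q')
    (hq' : IsPrimitiveRoot q' m) (hm : 0 < m) (hqm : q ^ m ≠ 1) (hd : 0 < d) (hmd : m.Coprime d)
    (u : ℕ) :
    ∃ y, HasResidue φ (qPochhammer (q * (q ^ d) ^ (u * m)) (q ^ d) m /
      qPochhammer (q ^ d * (q ^ d) ^ (u * m)) (q ^ d) m) y := by
  have hQ' : IsPrimitiveRoot (q' ^ d) m := hq'.pow_of_coprime d hmd.symm
  have hQ : HasResidue φ (q ^ d) (q' ^ d) := hq.pow d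
  have hqm1 : HasResidue φ (q ^ m) 1 := hq'.pow_eq_one ▸ hq.pow m
  have hQum : HasResidue φ ((q ^ d) ^ (u * m)) 1 := by
    simpa [mul_comm u, pow_mul _ m, hQ'.pow_eq_one] using hQ.pow (u * m)
  obtain ⟨r, hrm, t, ht⟩ := exists_lt_dvd_one_add_mul hm hmd
  obtain ⟨m, rfl⟩ := Nat.exists_eq_add_one_of_ne_zero hm.ne'
  have singular := hqm1.one_sub_pow_div_one_sub_pow hqm (t + d * u) (β := d * (u + 1))
    (by positivity)
  have regular := (HasResidue.prod (s := (range (m + 1)).erase r) fun i _ =>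
    HasResidue.one.sub ((hq.mul hQum).mul (hQ.pow i))).div ((hQ.mul hQum).qPochhammer hQ m)
    (by simpa using qPochhammer_self_ne_zero hQ' m.lt_succ_self)
  have numerator : q * (q ^ d) ^ (u * (m + 1)) * (q ^ d) ^ r = (q ^ (m + 1)) ^ (t + d * u) := by
    rw [← pow_mul q (m + 1), mul_add (m + 1), ← ht]; ring
  have denominator : q ^ d * (q ^ d) ^ (u * (m + 1)) * (q ^ d) ^ m =
      (q ^ (m + 1)) ^ (d * (u + 1)) := by ring
  have split : qPochhammer (q * (q ^ d) ^ (u * (m + 1))) (q ^ d) (m + 1) =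
      (1 - (q ^ (m + 1)) ^ (t + d * u)) *
        ∏ i ∈ (range (m + 1)).erase r, (1 - q * (q ^ d) ^ (u * (m + 1)) * (q ^ d) ^ i) := by
    rw [← numerator, mul_prod_erase _ (fun i => 1 - q * (q ^ d) ^ (u * (m + 1)) * (q ^ d) ^ i)
      (mem_range.2 hrm), qPochhammer]
  rw [split, qPochhammer_succ, denominator, mul_comm (qPochhammer _ _ _), ← div_mul_div_comm]
  exact ⟨_, singular.mul regular⟩

lemma exists_hasResidue_qPochhammer_div [CharZero κ] (hq : HasResidue φ q q')
    (hq' : IsPrimitiveRoot q' m) (hm : 0 < m) (hqm : q ^ m ≠ 1) (hd : 0 < d) (hmd : m.Coprime d)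
    (u : ℕ) :
    ∃ y, HasResidue φ
      (qPochhammer q (q ^ d) (u * m) / qPochhammer (q ^ d) (q ^ d) (u * m)) y := by
  induction u with
  | zero => exact ⟨1, by simpa using HasResidue.one⟩
  | succ u ih =>
    obtain ⟨y, hy⟩ := ih
    obtain ⟨z, hz⟩ := exists_hasResidue_qPochhammer_div_block hq hq' hm hqm hd hmd u
    rw [add_mul, one_mul, qPochhammer_add, qPochhammer_add, ← div_mul_div_comm]
    exact ⟨_, hy.mul hz⟩

lemma exists_hasResidue_wellPoised_self [CharZero κ] (hq : HasResidue φ q q')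
    (hq' : IsPrimitiveRoot q' m) (hm : 0 < m) (hqm : q ^ m ≠ 1) (hd : 0 < d) (hmd : m.Coprime d)
    (u : ℕ) :
    ∃ y, ∀ i < m, HasResidue φ (wellPoised q (q ^ d) (q ^ d) (q ^ d) (u * m + i))
      (y * wellPoised q' (q' ^ d) (q' ^ d) (q' ^ d) i) := by
  have hq0' : q' ≠ 0 := hq'.ne_zero hm.ne'
  have hQ0' : q' ^ d ≠ 0 := pow_ne_zero d hq0'
  have hQ0 : q ^ d ≠ 0 := (hq.pow d).ne_zero hQ0'
  have hQ' : IsPrimitiveRoot (q' ^ d) m := hq'.pow_of_coprime d hmd.symm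
  have hQum : HasResidue φ ((q ^ d) ^ (u * m)) 1 := by
    simpa [mul_comm u, pow_mul _ m, hQ'.pow_eq_one] using (hq.pow d).pow (u * m)
  obtain ⟨y, hy⟩ := exists_hasResidue_qPochhammer_div hq hq' hm hqm hd hmd u
  have base := ((hq.pow d).mul (hq.pow d)).div (hq.mul (hq.pow d)) (mul_ne_zero hq0' hQ0')
  obtain ⟨z, block⟩ : ∃ z, HasResidue φ (wellPoised q (q ^ d) (q ^ d) (q ^ d) (u * m)) z := by
    rw [wellPoised, mul_div_cancel_right₀ _ hQ0, ← div_mul_div_comm]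
    exact ⟨_, (hy.mul hy).mul (base.pow (u * m))⟩
  refine ⟨z, fun i hi => wellPoised_add hQ0 (u * m) i ▸ block.mul ?_⟩
  have hA : HasResidue φ (q * (q ^ d) ^ (2 * (u * m))) q' := by
    simpa [two_mul, pow_add] using hq.mul (hQum.mul hQum)
  have hv : HasResidue φ (q ^ d * (q ^ d) ^ (u * m)) (q' ^ d) := by
    simpa using (hq.pow d).mul hQum
  have hregi := qPochhammer_self_ne_zero hQ' hi
  exact hA.wellPoised hv hv (hq.pow d) hq0' hQ0' hQ0' hQ0' hregi hregi

lemma wellPoised_mul_add {A v w Q : κ} (hm : 0 < m) (hQ : Q ^ m = 1) (u i : ℕ) :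
    wellPoised A v w Q (u * m + i) = wellPoised A v w Q (u * m) * wellPoised A v w Q i := by
  have hQ0 : Q ≠ 0 := fun h => by simp [h, hm.ne'] at hQ
  rw [wellPoised_add hQ0]
  simp [mul_comm u, mul_left_comm 2 m, pow_mul _ m, hQ]

lemma veryWellPoised_mul_add {A Q : κ} (hQ : Q ^ m = 1) (u i : ℕ) :
    veryWellPoised A Q (u * m + i) = veryWellPoised A Q i := by
  rw [veryWellPoised_add]
  simp [mul_comm u, mul_left_comm 2 m, pow_mul _ m, hQ]

lemma exists_hasResidue_summand_block [CharZero κ] (hq : HasResidue φ q q')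
    (ha : HasResidue φ a a') (hb : HasResidue φ b b') (hq' : IsPrimitiveRoot q' m) (hm : 0 < m)
    (hqm : q ^ m ≠ 1) (hd : 0 < d) (hmd : m.Coprime d) (ha0 : a' ≠ 0) (ham : a' ^ m ≠ 1)
    (hb0 : b' ≠ 0) (hbm : b' ^ m ≠ 1) (u : ℕ) :
    ∃ y, ∀ i < m, HasResidue φ (summand q (q ^ d) a b 1 (u * m + i))
      (y * summand q' (q' ^ d) a' b' 1 i) := by
  have hq0' : q' ≠ 0 := hq'.ne_zero hm.ne'
  have hQ' : (q' ^ d) ^ m = 1 := (hq'.pow_of_coprime d hmd.symm).pow_eq_one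
  have residue {x : L} {x' : κ} (hx : HasResidue φ x x') (hx0 : x' ≠ 0) (hxm : x' ^ m ≠ 1) (k : ℕ) :
      HasResidue φ (wellPoised q (q ^ d / x) (x * q ^ d) (q ^ d) k)
        (wellPoised q' (q' ^ d / x') (x' * q' ^ d) (q' ^ d) k) :=
    hq.wellPoised_div_mul (hq.pow d) hx hq0' (pow_ne_zero d hq0') hx0
      (qPochhammer_ne_zero_of_pow_ne_one hQ' (by simpa [div_pow, hQ']) k)
      (qPochhammer_ne_zero_of_pow_ne_one hQ' (by simpa [mul_pow, hQ']) k)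
  obtain ⟨y, hy⟩ := exists_hasResidue_wellPoised_self hq hq' hm hqm hd hmd u
  refine ⟨y * wellPoised q' (q' ^ d / a') (a' * q' ^ d) (q' ^ d) (u * m) *
    wellPoised q' (q' ^ d / b') (b' * q' ^ d) (q' ^ d) (u * m), fun i hi => ?_⟩
  have := (((hq.veryWellPoised (hq.pow d) (pow_ne_zero d hq0') (u * m + i)).mul (hy i hi)).mul
    (residue ha ha0 ham (u * m + i))).mul (residue hb hb0 hbm (u * m + i))
  rw [veryWellPoised_mul_add hQ', wellPoised_mul_add hm hQ', wellPoised_mul_add hm hQ'] at this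
  convert this using 1
  · rw [summand, one_mul]
  · rw [summand, one_mul]; ring

lemma hasResidue_sum_summand_zero [CharZero κ] (hq : HasResidue φ q q')
    (ha : HasResidue φ a a') (hb : HasResidue φ b b') (hq' : IsPrimitiveRoot q' m) (hm : 0 < m)
    (hqm : q ^ m ≠ 1) (hd : 0 < d) (hmd : m.Coprime d) (ha0 : a' ≠ 0) (ham : a' ^ m ≠ 1)
    (hb0 : b' ≠ 0) (hbm : b' ^ m ≠ 1) (u : ℕ) :
    HasResidue φ (∑ k ∈ range (u * m), summand q (q ^ d) a b 1 k) 0 := by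
  have vanishing : ∑ i ∈ range m, summand q' (q' ^ d) a' b' 1 i = 0 :=
    sum_summand_eq_zero hq'.pow_eq_one (hq'.pow_of_coprime d hmd.symm) hm fun k hk =>
      summandRegular_of_isPrimitiveRoot hq'.pow_eq_one (hq'.pow_of_coprime d hmd.symm) ha0 ham hb0
        hbm one_ne_zero (.inl rfl) hk
  induction u with
  | zero => simpa using HasResidue.zero
  | succ u ih =>
    obtain ⟨y, hy⟩ := exists_hasResidue_summand_block hq ha hb hq' hm hqm hd hmd ha0 ham hb0 hbm u
    have block := HasResidue.sum (s := range m) fun i hi => hy i (mem_range.1 hi)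
    rw [← mul_sum, vanishing, mul_zero] at block
    rw [add_mul, one_mul, sum_range_add]
    simpa using ih.add block

end Blocks

section WatsonDivisibility

variable {S L κ : Type*} [CommRing S] [Field L] [Algebra S L] [IsFractionRing S L] [Field κ]
  {φ : S →+* κ} {p : S} {q Q a b : L} {q' Q' a' b' : κ} {r s j : ℕ}

lemma hasResidue_qPochhammer_div_zero (hq : HasResidue φ q q') (hQ : HasResidue φ Q Q')
    (ha : HasResidue φ a a') (hq0 : q' ≠ 0) (hQ0 : Q' ≠ 0) (ha0 : a' ≠ 0) (hQs : Q' ^ s = q')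
    (hs : 0 < s) (hsj : s ≤ j) :
    HasResidue φ (qPochhammer (Q / a * (a * Q) / (q * Q)) Q j) 0 := by
  have vanishing : qPochhammer (Q' / a' * (a' * Q') / (q' * Q')) Q' j = 0 := by
    refine qPochhammer_eq_zero (i := s - 1) (by omega) ?_
    have : Q' ^ (s - 1) * Q' = q' := by rw [← pow_succ, Nat.sub_add_cancel hs, hQs]
    field_simp
    linear_combination this
  rw [← vanishing]
  exact (((hQ.div ha ha0).mul (ha.mul hQ)).div (hq.mul hQ) (mul_ne_zero hq0 hQ0)).qPochhammer hQ j

lemma dvdAt_qPochhammer_mul_qPochhammer (hφ : RingHom.ker φ = Ideal.span {p})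
    (hq : HasResidue φ q q') (hQ : HasResidue φ Q Q') (ha : HasResidue φ a a')
    (hb : HasResidue φ b b') (hq0 : q' ≠ 0) (hQ0 : Q' ≠ 0) (ha0 : a' ≠ 0) (hb0 : b' ≠ 0)
    (hQs : Q' ^ s = q') (hs : 0 < s) (hsr : 2 * s ≤ r + 1) (j : ℕ) :
    DvdAt φ p (qPochhammer (Q / a * (a * Q) / (q * Q)) Q j *
      qPochhammer (Q / b * (b * Q) / (q * Q)) Q (r - j)) := by
  have regular {x : L} {x' : κ} (hx : HasResidue φ x x') (hx0 : x' ≠ 0) (k : ℕ) :=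
    (((hQ.div hx hx0).mul (hx.mul hQ)).div (hq.mul hQ) (mul_ne_zero hq0 hQ0)).qPochhammer hQ k
  rcases le_or_gt s j with hsj | hsj
  · exact (hasResidue_qPochhammer_div_zero hq hQ ha hq0 hQ0 ha0 hQs hs hsj).dvdAt hφ
      |>.mul_hasResidue (regular hb hb0 _)
  · rw [mul_comm]
    exact (hasResidue_qPochhammer_div_zero hq hQ hb hq0 hQ0 hb0 hQs hs (by omega)).dvdAt hφ
      |>.mul_hasResidue (regular ha ha0 _)

/-- The factor `(q; Q)_{r+j+1}` vanishes at `φ`, and so does one of the factors `(Q/q; Q)_j` and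
`(Q/q; Q)_{r-j}`, because `j` and `r - j` cannot both be less than `s`. -/
lemma dvdAt_sq_watsonTerm (hφ : RingHom.ker φ = Ideal.span {p}) (hq : HasResidue φ q q')
    (hQ : HasResidue φ Q Q') (ha : HasResidue φ a a') (hb : HasResidue φ b b')
    (hreg : SummandRegular q' Q' a' b' 1 r) (hqr : q' * Q' ^ r = 1) (hQs : Q' ^ s = q')
    (hs : 0 < s) (hsr : 2 * s ≤ r + 1) (hjr : j ≤ r) :
    DvdAt φ (p ^ 2) (watsonTerm q (Q / a) (a * Q) (Q / b) (b * Q) Q r j) := by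
  obtain ⟨hq0, hQ0, ha0, hb0, -, hself, -, hdiva, hamul, hdivb, hbmul⟩ := hreg
  have hqQ0 := mul_ne_zero hq0 hQ0
  have hu := hQ.div ha ha0
  have hv := ha.mul hQ
  have hu' := hQ.div hb hb0
  have hv' := hb.mul hQ
  have first : DvdAt φ p (qPochhammer q Q (r + j + 1)) :=
    HasResidue.dvdAt hφ (qPochhammer_eq_zero (by omega : r < r + j + 1) hqr ▸ hq.qPochhammer hQ _)
  have second := dvdAt_qPochhammer_mul_qPochhammer hφ hq hQ ha hb hq0 hQ0 ha0 hb0 hQs hs hsr j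
  have numerator := ((((hQ.pow r).inv (pow_ne_zero r hQ0)).qPochhammer hQ j).mul
    (((hQ.pow j).inv (pow_ne_zero j hQ0)).qPochhammer hQ j)).mul ((hQ.pow (r + 1)).pow j)
    |>.mul (((((hq.mul hQ).div hu' (div_ne_zero hQ0 hb0)).qPochhammer hQ j).mul
      (((hq.mul hQ).div hv' (mul_ne_zero hb0 hQ0)).qPochhammer hQ j)).mul
      (((hu'.mul hv').div (hq.mul hQ) hqQ0).pow j))
  have denominator := (((hQ.qPochhammer hQ j).pow 2).mul
    ((hq.mul (hQ.pow (r + 1))).qPochhammer hQ j)).mul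
    (((hu.qPochhammer hQ j).mul (hv.qPochhammer hQ j)).mul
      ((hu'.qPochhammer hQ r).mul (hv'.qPochhammer hQ r)))
  have hqQr : q' * Q' ^ (r + 1) = Q' := by rw [pow_succ, ← mul_assoc, hqr, one_mul]
  have nonzero {x : κ} : qPochhammer x Q' r ≠ 0 → qPochhammer x Q' j ≠ 0 :=
    qPochhammer_ne_zero_of_le hjr
  rw [watsonTerm, sq, mul_assoc (qPochhammer q Q _)]
  refine (first.mul second).mul_hasResidue (numerator.div denominator ?_)
  rw [hqQr]
  exact mul_ne_zero (mul_ne_zero (pow_ne_zero 2 (nonzero hself)) (nonzero hself)) <|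
    mul_ne_zero (mul_ne_zero (nonzero hdiva) (nonzero hamul)) (mul_ne_zero hdivb hbmul)

lemma dvdAt_sq_sum_summand_terminating (hφ : RingHom.ker φ = Ideal.span {p})
    (hq : HasResidue φ q q') (hQ : HasResidue φ Q Q') (ha : HasResidue φ a a')
    (hb : HasResidue φ b b') (hreg : SummandRegular q' Q' a' b' 1 r) (hqr : q' * Q' ^ r = 1)
    (hQs : Q' ^ s = q') (hs : 0 < s) (hsr : 2 * s ≤ r + 1) {n : ℕ} (hrn : r < n) :
    DvdAt φ (p ^ 2) (∑ k ∈ range n, summand q Q a b (q * Q ^ r) k) := by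
  have hc : HasResidue φ (q * Q ^ r) 1 := hqr ▸ hq.mul (hQ.pow r)
  rw [sum_summand_terminating_eq_sum_watsonTerm (hq.summandRegular hQ ha hb hc hreg) hrn]
  exact DvdAt.sum fun j hj =>
    dvdAt_sq_watsonTerm hφ hq hQ ha hb hreg hqr hQs hs hsr (by simpa [Nat.lt_succ_iff] using hj)

end WatsonDivisibility

section Specialization

open MvPolynomial (X)

variable {κ : Type*} [Field κ] {φ : R →+* κ} {m n d s : ℕ}

/-- The substitution `c ↦ t` of the fourth variable. -/
def substC (t : R) : R →+* R := (MvPolynomial.aeval (Function.update X 3 t) : R →ₐ[ℚ] R)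

lemma substC_X_three (t : R) : substC t (X 3) = t := by simp [substC]

lemma substC_X_of_ne (t : R) {i : Fin 4} (hi : i ≠ 3) : substC t (X i) = X i := by
  simp [substC, hi]

lemma substC_Phi (t : R) : substC t (Phi n) = Phi n := by
  rw [Phi, Polynomial.hom_eval₂, substC_X_of_ne t (by decide)]
  congr 1
  ext; simp [substC]

lemma comp_substC_eq {t t' : R} (h : φ t = φ t') : φ.comp (substC t) = φ.comp (substC t') := by
  refine MvPolynomial.ringHom_ext (fun c => by simp [substC]) fun i => ?_
  by_cases hi : i = 3
  · simp [hi, substC_X_three, h]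
  · simp [substC_X_of_ne _ hi]

lemma hasResidue_sum_summand (d : ℕ)
    (h : ∀ k < n, SummandRegular (φ (X 0)) (φ (X 0) ^ d) (φ (X 1)) (φ (X 2)) (φ (X 3)) k) :
    HasResidue φ (∑ k ∈ range n, summand qv (qv ^ d) av bv cv k)
      (∑ k ∈ range n, summand (φ (X 0)) (φ (X 0) ^ d) (φ (X 1)) (φ (X 2)) (φ (X 3)) k) :=
  HasResidue.sum fun k hk => (HasResidue.of_algebraMap φ (X 0)).summand
    ((HasResidue.of_algebraMap φ (X 0)).pow d) (HasResidue.of_algebraMap φ (X 1))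
    (HasResidue.of_algebraMap φ (X 2)) (HasResidue.of_algebraMap φ (X 3)) (h k (mem_range.1 hk))

variable [CharZero κ]

lemma map_X_ne_zero (hφ : RingHom.ker φ = Ideal.span {Phi m}) {i : Fin 4} (hi : i ≠ 0) :
    φ (X i) ≠ 0 :=
  fun h => transcendental_map_X hφ hi (h ▸ isAlgebraic_zero)

lemma map_X_pow_ne_one (hφ : RingHom.ker φ = Ideal.span {Phi m}) (hm : 0 < m) {i : Fin 4}
    (hi : i ≠ 0) : φ (X i) ^ m ≠ 1 :=
  fun h => transcendental_map_X hφ hi (.of_pow hm (h ▸ isAlgebraic_one))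

lemma summandRegular_map_X (hφ : RingHom.ker φ = Ideal.span {Phi m}) (hm : 0 < m)
    (hmd : m.Coprime d) {c : κ} (hc : c ≠ 0) (hcm : c = 1 ∨ c ^ m ≠ 1) {k : ℕ} (hk : k < m) :
    SummandRegular (φ (X 0)) (φ (X 0) ^ d) (φ (X 1)) (φ (X 2)) c k :=
  have hq := isPrimitiveRoot_map_X_zero hφ hm
  summandRegular_of_isPrimitiveRoot hq.pow_eq_one (hq.pow_of_coprime d hmd.symm)
    (map_X_ne_zero hφ (by decide)) (map_X_pow_ne_one hφ hm (by decide))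
    (map_X_ne_zero hφ (by decide)) (map_X_pow_ne_one hφ hm (by decide)) hc hcm hk

lemma dvdAt_sq_sum_summand_sub (hφ : RingHom.ker φ = Ideal.span {Phi n}) (hn : 0 < n)
    (hnd : n.Coprime d) {t : R} (ht : φ t = 1) :
    DvdAt φ (Phi n ^ 2) (∑ k ∈ range n, summand qv (qv ^ d) av bv 1 k -
      ∑ k ∈ range n, summand qv (qv ^ d) av bv (algebraMap R K t) k) := by
  have regular {c : κ} (hc : c ≠ 0) (hcm : c = 1 ∨ c ^ n ≠ 1) (k : ℕ) (hk : k < n) :=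
    summandRegular_map_X hφ hn hnd hc hcm hk
  have special {t : R} (ht : φ t = 1) :
      HasResidue ((algebraMap R K).comp (substC t)) (∑ k ∈ range n, summand qv (qv ^ d) av bv cv k)
        (∑ k ∈ range n, summand qv (qv ^ d) av bv (algebraMap R K t) k) := by
    have := hasResidue_sum_summand (φ := (algebraMap R K).comp (substC t)) (n := n) d
    simp only [RingHom.comp_apply, substC_X_three, substC_X_of_ne t (by decide : (0 : Fin 4) ≠ 3),
      substC_X_of_ne t (by decide : (1 : Fin 4) ≠ 3),
      substC_X_of_ne t (by decide : (2 : Fin 4) ≠ 3)] at this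
    refine this fun k hk => ?_
    exact (HasResidue.of_algebraMap φ (X 0)).summandRegular
      ((HasResidue.of_algebraMap φ (X 0)).pow d) (HasResidue.of_algebraMap φ (X 1))
      (HasResidue.of_algebraMap φ (X 2)) (ht ▸ HasResidue.of_algebraMap φ t)
      (regular one_ne_zero (.inl rfl) k hk)
  have hq := isPrimitiveRoot_map_X_zero hφ hn
  have regular_c := regular (map_X_ne_zero hφ (by decide : (3 : Fin 4) ≠ 0))
    (.inr (map_X_pow_ne_one hφ hn (by decide)))
  have vanishing := hasResidue_sum_summand d regular_c
  rw [sum_summand_eq_zero hq.pow_eq_one (hq.pow_of_coprime d hnd.symm) hn regular_c] at vanishing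
  refine DvdAt.sub_of_specializations hφ (σ := substC 1) (τ := substC t) (substC_Phi _)
    (substC_Phi _) (comp_substC_eq (by rw [map_one, ht])) vanishing
    (hasResidue_sum_summand d ?_) ?_ (special ht)
  · simpa [substC_X_of_ne, substC_X_three] using regular one_ne_zero (.inl rfl)
  · simpa using special (map_one φ)

lemma dvdAt_sq_sum_summand (hφ : RingHom.ker φ = Ideal.span {Phi n}) (hn : 0 < n) (hd : 3 ≤ d)
    (hnd : n.Coprime d) (hs : n + 1 = d * s) :
    DvdAt φ (Phi n ^ 2) (∑ k ∈ range n, summand qv (qv ^ d) av bv 1 k) := by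
  have hq := isPrimitiveRoot_map_X_zero hφ hn
  have hs0 : 0 < s := Nat.pos_of_ne_zero fun h => by simp [h] at hs
  have h3s : 3 * s ≤ n + 1 := hs ▸ Nat.mul_le_mul_right s hd
  obtain ⟨r, rfl⟩ : ∃ r, n = r + s := Nat.exists_eq_add_of_le' (by omega)
  have hQs : (φ (X 0) ^ d) ^ s = φ (X 0) := by
    rw [← pow_mul, ← hs, pow_succ, hq.pow_eq_one, one_mul]
  have hqr : φ (X 0) * (φ (X 0) ^ d) ^ r = 1 := by
    have hQ : (φ (X 0) ^ d) ^ (s + r) = 1 := by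
      rw [pow_right_comm, add_comm, hq.pow_eq_one, one_pow]
    rwa [pow_add, hQs] at hQ
  have terminating : DvdAt φ (Phi (r + s) ^ 2)
      (∑ k ∈ range (r + s), summand qv (qv ^ d) av bv (qv * (qv ^ d) ^ r) k) :=
    dvdAt_sq_sum_summand_terminating hφ (HasResidue.of_algebraMap φ (X 0))
    ((HasResidue.of_algebraMap φ (X 0)).pow d) (HasResidue.of_algebraMap φ (X 1))
    (HasResidue.of_algebraMap φ (X 2))
    (summandRegular_map_X hφ hn hnd one_ne_zero (.inl rfl) (by omega)) hqr hQs hs0 (by omega)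
    (by omega : r < r + s)
  have difference := dvdAt_sq_sum_summand_sub hφ hn hnd (t := X 0 * (X 0 ^ d) ^ r) (by simpa)
  simp only [map_mul, map_pow] at difference
  simpa [qv] using difference.add terminating

end Specialization

section Theorem

open MvPolynomial (X)

variable {m n d : ℕ}

lemma hasResidue_inv_one_sub_qv {κ : Type*} [Field κ] [CharZero κ] {φ : R →+* κ}
    (hφ : RingHom.ker φ = Ideal.span {Phi m}) (hm : 1 < m) :
    HasResidue φ (1 - qv)⁻¹ (1 - φ (X 0))⁻¹ :=
  (HasResidue.one.sub (HasResidue.of_algebraMap φ (X 0))).inv <|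
    sub_ne_zero.2 ((isPrimitiveRoot_map_X_zero hφ (by omega)).ne_one hm).symm

lemma modCong_Phi_sum_summand (hm : 1 < m) (hmn : m ∣ n) (hd : 0 < d) (hnd : n.Coprime d) :
    modCong (Phi m) ((∑ k ∈ range n, summand qv (qv ^ d) av bv 1 k) * (1 - qv)⁻¹) := by
  have hm0 : 0 < m := by omega
  obtain ⟨κ, _, _, φ, hφ⟩ := exists_ker_eq_span_Phi hm0
  obtain ⟨u, rfl⟩ := hmn
  have residue := hasResidue_sum_summand_zero (HasResidue.of_algebraMap φ (X 0))
    (HasResidue.of_algebraMap φ (X 1)) (HasResidue.of_algebraMap φ (X 2))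
    (isPrimitiveRoot_map_X_zero hφ hm0) hm0 (qv_pow_ne_one hm0) hd hnd.coprime_mul_right
    (map_X_ne_zero hφ (by decide)) (map_X_pow_ne_one hφ hm0 (by decide))
    (map_X_ne_zero hφ (by decide)) (map_X_pow_ne_one hφ hm0 (by decide)) u
  rw [mul_comm m u, ← pow_one (Phi m)]
  refine DvdAt.modCong_pow (prime_Phi hm0) hφ ?_
  rw [pow_one]
  exact (residue.dvdAt hφ).mul_hasResidue (hasResidue_inv_one_sub_qv hφ hm)

lemma modCong_Phi_sq_sum_summand (hn : 1 < n) (hd : 3 ≤ d) (hnd : n.Coprime d)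
    (hdn : d ∣ n + 1) :
    modCong (Phi n ^ 2) ((∑ k ∈ range n, summand qv (qv ^ d) av bv 1 k) * (1 - qv)⁻¹) := by
  have hn0 : 0 < n := by omega
  obtain ⟨κ, _, _, φ, hφ⟩ := exists_ker_eq_span_Phi hn0
  obtain ⟨s, hs⟩ := hdn
  exact DvdAt.modCong_pow (prime_Phi hn0) hφ <|
    (dvdAt_sq_sum_summand hφ hn0 hd hnd hs).mul_hasResidue (hasResidue_inv_one_sub_qv hφ hn)

lemma summand_one {F : Type*} [Field F] {q Q a b : F} (hq : q ≠ 0) (hQ : Q ≠ 0) (ha : a ≠ 0)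
    (hb : b ≠ 0) (k : ℕ) :
    summand q Q a b 1 k =
      (1 - q * Q ^ (2 * k)) *
        (qPochhammer (a * q) Q k * qPochhammer (q / a) Q k * qPochhammer (b * q) Q k *
          qPochhammer (q / b) Q k * qPochhammer q Q k ^ 2) /
        (qPochhammer (a * Q) Q k * qPochhammer (Q / a) Q k * qPochhammer (b * Q) Q k *
          qPochhammer (Q / b) Q k * qPochhammer Q Q k ^ 2) *
        (Q ^ 2 / q ^ 3) ^ k := by
  have wellPoised_eq {x : F} (hx : x ≠ 0) : wellPoised q (Q / x) (x * Q) Q k =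
      qPochhammer (x * q) Q k * qPochhammer (q / x) Q k /
        (qPochhammer (x * Q) Q k * qPochhammer (Q / x) Q k) * (Q / q) ^ k := by
    have h₁ : q * Q / (Q / x) = x * q := by field_simp
    have h₂ : q * Q / (x * Q) = q / x := by field_simp
    have h₃ : Q / x * (x * Q) / (q * Q) = Q / q := by field_simp
    rw [wellPoised, h₁, h₂, h₃, mul_comm (qPochhammer (Q / x) Q k)]
  have wellPoised_self := wellPoised_eq one_ne_zero
  have power : (Q ^ 2 / q ^ 3) ^ k = (Q / q) ^ k * (Q / q) ^ k * (Q / q) ^ k / Q ^ k := by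
    rw [← mul_pow, ← mul_pow, ← div_pow]
    congr 1
    field_simp
  simp only [div_one, one_mul] at wellPoised_self
  rw [summand, one_mul, wellPoised_self, wellPoised_eq ha, wellPoised_eq hb, veryWellPoised, power]
  simp only [div_eq_mul_inv, mul_inv]
  ring

lemma qint_mul_poch_div_poch_eq_summand (d k : ℕ) :
    qint (2 * d * k + 1) *
        (poch (av * qv) (qv ^ (d : ℤ)) k * poch (qv / av) (qv ^ (d : ℤ)) k *
          poch (bv * qv) (qv ^ (d : ℤ)) k * poch (qv / bv) (qv ^ (d : ℤ)) k *
          poch qv (qv ^ (d : ℤ)) k ^ 2) /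
        (poch (av * qv ^ (d : ℤ)) (qv ^ (d : ℤ)) k * poch (qv ^ (d : ℤ) / av) (qv ^ (d : ℤ)) k *
          poch (bv * qv ^ (d : ℤ)) (qv ^ (d : ℤ)) k * poch (qv ^ (d : ℤ) / bv) (qv ^ (d : ℤ)) k *
          poch (qv ^ (d : ℤ)) (qv ^ (d : ℤ)) k ^ 2) *
        qv ^ ((2 * (d : ℤ) - 3) * k) =
      summand qv (qv ^ d) av bv 1 k * (1 - qv)⁻¹ := by
  have hq : qv ≠ 0 := by simp [qv]
  have ha : av ≠ 0 := by simp [av]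
  have hb : bv ≠ 0 := by simp [bv]
  have qint_eq : qint (2 * d * k + 1) = (1 - qv * (qv ^ d) ^ (2 * k)) * (1 - qv)⁻¹ := by
    have exponent : (2 * d * k + 1 : ℤ) = (d * (2 * k) + 1 : ℕ) := by push_cast; ring
    rw [qint, exponent, zpow_natCast, pow_succ', pow_mul, div_eq_mul_inv]
  have zpow_eq : qv ^ ((2 * (d : ℤ) - 3) * k) = ((qv ^ d) ^ 2 / qv ^ 3) ^ k := by
    rw [zpow_mul, zpow_sub₀ hq, mul_comm, zpow_mul]
    norm_cast
  have poch_eq (x Q : K) : poch x Q k = qPochhammer x Q k := rfl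
  rw [summand_one hq (pow_ne_zero d hq) ha hb]
  simp only [qint_eq, zpow_eq, poch_eq, zpow_natCast]
  ring

lemma one_lt_and_dvd_of_mem_divisors_erase (hm : m ∈ n.divisors.erase 1) : 1 < m ∧ m ∣ n := by
  obtain ⟨hm1, hm⟩ := mem_erase.1 hm
  exact ⟨by have := Nat.pos_of_mem_divisors hm; omega, Nat.dvd_of_mem_divisors hm⟩

lemma modCong_qintR_sum_summand (hn : 0 < n) (hd : 0 < d) (hnd : n.Coprime d) :
    modCong (qintR n) ((∑ k ∈ range n, summand qv (qv ^ d) av bv 1 k) * (1 - qv)⁻¹) := by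
  rw [qintR_eq_prod_Phi hn]
  refine modCong_prod (fun _ _ _ _ h => isRelPrime_Phi h) fun m hm => ?_
  obtain ⟨hm1, hmn⟩ := one_lt_and_dvd_of_mem_divisors_erase hm
  exact modCong_Phi_sum_summand hm1 hmn hd hnd

lemma qintR_mul_Phi_eq_prod (hn : 1 < n) :
    qintR n * Phi n = ∏ m ∈ n.divisors.erase 1, Phi m ^ (if m = n then 2 else 1) := by
  have mem : n ∈ n.divisors.erase 1 := mem_erase.2 ⟨by omega, Nat.mem_divisors_self n (by omega)⟩
  have pow_eq (m : ℕ) : Phi m ^ (if m = n then 2 else 1) = Phi m * if m = n then Phi m else 1 := by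
    split_ifs <;> ring
  simp only [pow_eq, prod_mul_distrib, prod_ite_eq', mem, if_true,
    qintR_eq_prod_Phi (zero_lt_one.trans hn)]

lemma modCong_qintR_mul_Phi_sum_summand (hn : 1 < n) (hd : 3 ≤ d) (hnd : n.Coprime d)
    (hdn : d ∣ n + 1) :
    modCong (qintR n * Phi n)
      ((∑ k ∈ range n, summand qv (qv ^ d) av bv 1 k) * (1 - qv)⁻¹) := by
  rw [qintR_mul_Phi_eq_prod hn]
  refine modCong_prod (fun _ _ _ _ h => (isRelPrime_Phi h).pow) fun m hm => ?_
  split_ifs with hmn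
  · subst hmn
    exact modCong_Phi_sq_sum_summand hn hd hnd hdn
  · obtain ⟨hm1, hmn⟩ := one_lt_and_dvd_of_mem_divisors_erase hm
    rw [pow_one]
    exact modCong_Phi_sum_summand hm1 hmn (by omega) hnd

end Theorem

theorem stmt4 (n d : ℕ) (hn : 0 < n) (hd : 3 ≤ d) (hnd : Nat.gcd n d = 1) :
    (((n : ℤ) ≡ -1 [ZMOD (d : ℤ)]) →
      modCong (qintR n * Phi n)
        (∑ k ∈ Finset.range n,
          qint (2 * d * k + 1) *
            (poch (av * qv) (qv ^ (d : ℤ)) k * poch (qv / av) (qv ^ (d : ℤ)) k *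
              poch (bv * qv) (qv ^ (d : ℤ)) k * poch (qv / bv) (qv ^ (d : ℤ)) k *
              poch qv (qv ^ (d : ℤ)) k ^ 2) /
            (poch (av * qv ^ (d : ℤ)) (qv ^ (d : ℤ)) k * poch (qv ^ (d : ℤ) / av) (qv ^ (d : ℤ)) k *
              poch (bv * qv ^ (d : ℤ)) (qv ^ (d : ℤ)) k * poch (qv ^ (d : ℤ) / bv) (qv ^ (d : ℤ)) k *
              poch (qv ^ (d : ℤ)) (qv ^ (d : ℤ)) k ^ 2) *
            qv ^ ((2 * (d : ℤ) - 3) * k))) ∧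
    (¬ ((n : ℤ) ≡ -1 [ZMOD (d : ℤ)]) →
      modCong (qintR n)
        (∑ k ∈ Finset.range n,
          qint (2 * d * k + 1) *
            (poch (av * qv) (qv ^ (d : ℤ)) k * poch (qv / av) (qv ^ (d : ℤ)) k *
              poch (bv * qv) (qv ^ (d : ℤ)) k * poch (qv / bv) (qv ^ (d : ℤ)) k *
              poch qv (qv ^ (d : ℤ)) k ^ 2) /
            (poch (av * qv ^ (d : ℤ)) (qv ^ (d : ℤ)) k * poch (qv ^ (d : ℤ) / av) (qv ^ (d : ℤ)) k *
              poch (bv * qv ^ (d : ℤ)) (qv ^ (d : ℤ)) k * poch (qv ^ (d : ℤ) / bv) (qv ^ (d : ℤ)) k *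
              poch (qv ^ (d : ℤ)) (qv ^ (d : ℤ)) k ^ 2) *
            qv ^ ((2 * (d : ℤ) - 3) * k))) := by
  simp only [qint_mul_poch_div_poch_eq_summand, ← sum_mul]
  refine ⟨fun hmod => ?_, fun _ => modCong_qintR_sum_summand hn (by omega) hnd⟩
  have hdn : d ∣ n + 1 := by
    have := hmod.symm.dvd
    rw [sub_neg_eq_add] at this
    exact_mod_cast this
  have hn1 : n ≠ 1 := by
    rintro rfl
    have := Nat.le_of_dvd two_pos hdn
    omega
  exact modCong_qintR_mul_Phi_sum_summand (by omega) hd hnd hdn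

end
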